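/- arXiv:2106.03726 — 2 statements merged into one kernel-verified Lean document; each statement's English description precedes it below -/
import Mathlib

section
/- Let d ≥ 3 and let q_1, …, q_d be pairwise coprime positive integers. Let V, Y : ℤ^d → ℝ be Γ-periodic potentials that are Fermi isospectral. If Y is (d_1,…,d_r) separable (for some r ≥ 2 and d_1,…,d_r ≥ 1 with d_1 + ⋯ + d_r = d), then V is (d_1,…,d_r) separable. -/
open scoped BigOperators
open Complex

noncomputable section

/-- The fundamental domain `W` for `Γ = q₁ℤ ⊕ ⋯ ⊕ q_dℤ`, as a type. -/
abbrev Cell (d : ℕ) (q : Fin d → ℕ) := (j : Fin d) → Fin (q j)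

/-- `V : ℤ^d → ℝ` is `Γ`-periodic for `Γ = q₁ℤ ⊕ ⋯ ⊕ q_dℤ`. -/
def IsPeriodicPotential (d : ℕ) (q : Fin d → ℕ) (V : (Fin d → ℤ) → ℝ) : Prop :=
  ∀ n γ : Fin d → ℤ, (∀ j, (q j : ℤ) ∣ γ j) → V (n + γ) = V n

/-- The discrete Fourier transform `V̂(l)`, defined for all `l ∈ ℤ^d`
(it is automatically `Γ`-periodic in `l`). -/
def dft (d : ℕ) (q : Fin d → ℕ) (V : (Fin d → ℤ) → ℝ) (l : Fin d → ℤ) : ℂ :=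
  (1 / ∏ j, (q j : ℂ)) *
    ∑ n : Cell d q, (V (fun j => ((n j : ℕ) : ℤ)) : ℂ) *
      Complex.exp (-(2 * Real.pi * Complex.I) * ∑ j, (l j : ℂ) * ((n j : ℕ) : ℂ) / (q j : ℂ))

/-- `ρ^j_m = e^{2πi m/q_j}`. -/
def rho (d : ℕ) (q : Fin d → ℕ) (j : Fin d) (m : ℤ) : ℂ :=
  Complex.exp (2 * Real.pi * Complex.I * (m : ℂ) / (q j : ℂ))

/-- The Floquet matrix `M_V(z)` (the matrix `A + B_V` of Lemma 2.7). -/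
def floquetMatrix (d : ℕ) (q : Fin d → ℕ) (V : (Fin d → ℤ) → ℝ) (z : Fin d → ℂ) :
    Matrix (Cell d q) (Cell d q) ℂ := fun n n' =>
  (if n = n' then ∑ j, (rho d q j (n j : ℕ) * z j + (rho d q j (n j : ℕ) * z j)⁻¹) else 0)
    + dft d q V (fun j => ((n j : ℕ) : ℤ) - ((n' j : ℕ) : ℤ))

/-- `P̃_V(z, λ) = det (M_V(z) − λ I)`. -/
def floquetDet (d : ℕ) (q : Fin d → ℕ) (V : (Fin d → ℤ) → ℝ) (z : Fin d → ℂ) (lam : ℂ) : ℂ :=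
  Matrix.det (floquetMatrix d q V z - lam • (1 : Matrix (Cell d q) (Cell d q) ℂ))

/-- `V` and `Y` are Fermi isospectral. -/
def FermiIsospectral (d : ℕ) (q : Fin d → ℕ) (V Y : (Fin d → ℤ) → ℝ) : Prop :=
  ∃ lam0 : ℂ,
    {z : Fin d → ℂ | (∀ j, z j ≠ 0) ∧ floquetDet d q V z lam0 = 0}
      = {z : Fin d → ℂ | (∀ j, z j ≠ 0) ∧ floquetDet d q Y z lam0 = 0}

/-- `V` and `Y` are Floquet isospectral. -/
def FloquetIsospectral (d : ℕ) (q : Fin d → ℕ) (V Y : (Fin d → ℤ) → ℝ) : Prop :=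
  ∀ z : Fin d → ℂ, (∀ j, z j ≠ 0) → ∀ lam : ℂ,
    floquetDet d q V z lam = floquetDet d q Y z lam

/-- The average `[V]` of `V` over one periodicity cell. -/
def potentialAvg (d : ℕ) (q : Fin d → ℕ) (V : (Fin d → ℤ) → ℝ) : ℝ :=
  (1 / ∏ j, (q j : ℝ)) * ∑ n : Cell d q, V (fun j => ((n j : ℕ) : ℤ))

/-- The embedding of the `j`-th block of coordinates into `Fin d`,
given block sizes `D : Fin r → ℕ` with `∑ j, D j = d`. -/
def blockEmbed {r d : ℕ} (D : Fin r → ℕ) (hsum : ∑ j, D j = d) (j : Fin r) (i : Fin (D j)) :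
    Fin d :=
  ⟨(∑ k ∈ Finset.univ.filter (fun k => k < j), D k) + i.1, by
    have hj : j ∉ Finset.univ.filter (fun k => k < j) := by simp
    have h2 : (∑ k ∈ Finset.univ.filter (fun k => k < j), D k) + D j ≤ ∑ k, D k := by
      calc (∑ k ∈ Finset.univ.filter (fun k => k < j), D k) + D j
          = ∑ k ∈ insert j (Finset.univ.filter (fun k => k < j)), D k := by
            rw [Finset.sum_insert hj, add_comm]
        _ ≤ ∑ k, D k := Finset.sum_le_sum_of_subset (Finset.subset_univ _)
    have h3 := i.2
    omega⟩

/-- `V` is `(D 0, …, D (r-1))` separable. -/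
def IsSeparablePotential {r : ℕ} (d : ℕ) (D : Fin r → ℕ) (hsum : ∑ j, D j = d)
    (V : (Fin d → ℤ) → ℝ) : Prop :=
  ∃ Vj : (j : Fin r) → (Fin (D j) → ℤ) → ℝ,
    ∀ n : Fin d → ℤ, V n = ∑ j, Vj j (fun i => n (blockEmbed D hsum j i))

theorem fi_persist (F G : ℂ × ℂ → ℂ) (hF : ContDiffAt ℂ 1 F 0) (c : ℂ) (hc : c ≠ 0)
    (hline : ∀ w, F (0, w) = c * w) (hG : ContinuousAt G 0)
    (h : ∀ᶠ p in nhds (0 : ℂ × ℂ), p.1 ≠ 0 → F p = 0 → G p = 0) : G 0 = 0 := by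
  have hs := hF.hasStrictFDerivAt (by norm_num)
  set F' := fderiv ℂ F 0 with hF'
  have hder : F' (0, 1) = c := by
    have h1 : HasFDerivAt F F' ((fun w : ℂ => ((0 : ℂ), w)) 0) := hs.hasFDerivAt
    have h2 : HasDerivAt (fun w : ℂ => ((0 : ℂ), w)) ((0 : ℂ), (1 : ℂ)) 0 :=
      (hasDerivAt_const _ _).prodMk (hasDerivAt_id _)
    have h3 := h1.comp_hasDerivAt (0 : ℂ) h2
    have h4 : HasDerivAt (fun w : ℂ => c * w) c 0 := by
      simpa using (hasDerivAt_id (0 : ℂ)).const_mul c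
    have h5 : (F ∘ fun w : ℂ => ((0 : ℂ), w)) = fun w => c * w := by
      funext w; exact hline w
    rw [h5] at h3
    exact h3.unique h4
  have hΦ : HasStrictFDerivAt (fun p : ℂ × ℂ => (p.1, F p))
      ((ContinuousLinearMap.fst ℂ ℂ ℂ).prod F') 0 :=
    (ContinuousLinearMap.fst ℂ ℂ ℂ).hasStrictFDerivAt.prodMk hs
  have hsurj : (((ContinuousLinearMap.fst ℂ ℂ ℂ).prod F' : ℂ × ℂ →L[ℂ] ℂ × ℂ) :
      ℂ × ℂ →ₗ[ℂ] ℂ × ℂ).range = ⊤ := by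
    rw [LinearMap.range_eq_top]
    rintro ⟨a, b⟩
    refine ⟨(a, (b - F' (a, 0)) / c), ?_⟩
    have : ((a, (b - F' (a, 0)) / c) : ℂ × ℂ) = (a, 0) + ((b - F' (a, 0)) / c) • (0, 1) := by
      simp
    have h6 : F' (a, (b - F' (a, 0)) / c) = b := by
      rw [this, map_add, map_smul, hder, smul_eq_mul, div_mul_cancel₀ _ hc]; ring
    simp [h6]
  have hmap := hΦ.map_nhds_eq_of_surj hsurj
  by_contra hne
  have hev : ∀ᶠ p in nhds (0 : ℂ × ℂ), p.1 ≠ 0 → F p ≠ 0 := by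
    filter_upwards [h, hG.eventually_ne hne] with p h1 h2 h3 h4
    exact h2 (h1 h3 h4)
  have hev2 : ∀ᶠ y in nhds ((0 : ℂ), (0 : ℂ)), y.1 ≠ 0 → y.2 ≠ 0 := by
    have : ((0 : ℂ), (0 : ℂ)) = (fun p : ℂ × ℂ => (p.1, F p)) 0 := by
      have := hline 0
      simp at this ⊢
      exact this.symm
    rw [this, ← hmap]
    exact hev
  have hev3 : ∀ᶠ t in nhds (0 : ℂ), ¬ (t ≠ 0) := by
    have ht : Filter.Tendsto (fun t : ℂ => (t, (0 : ℂ))) (nhds 0) (nhds ((0 : ℂ), (0 : ℂ))) :=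
      Continuous.tendsto' (by fun_prop) _ _ rfl
    filter_upwards [ht.eventually hev2] with t ht1 ht2
    exact ht1 ht2 rfl
  have : ({0} : Set ℂ) ∈ nhds (0 : ℂ) := by
    filter_upwards [hev3] with t ht
    simpa using ht
  have := (mem_nhds_iff.1 this)
  obtain ⟨U, hU, hUo, h0⟩ := this
  have : U = {0} := by
    apply Set.Subset.antisymm hU; simpa using h0
  rw [this] at hUo
  exact not_isOpen_singleton (0 : ℂ) hUo

theorem fi_det_two {ι : Type*} [Fintype ι] [DecidableEq ι] (N : Matrix ι ι ℂ) (o m : ι)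
    (hom : o ≠ m) (hN : ∀ n, n ≠ o → n ≠ m → ∀ n', n' ≠ n → N n n' = 0) :
    N.det = (N o o * N m m - N o m * N m o) *
      ∏ n : {n : ι // ¬ (n = o ∨ n = m)}, N n n := by
  rw [Matrix.twoBlockTriangular_det N (fun n => n = o ∨ n = m)]
  · congr 1
    · have hb : Function.Bijective
          (![⟨o, Or.inl rfl⟩, ⟨m, Or.inr rfl⟩] : Fin 2 → {n : ι // n = o ∨ n = m}) := by
        constructor
        · intro a b hab
          fin_cases a <;> fin_cases b <;> simp_all
        · rintro ⟨n, hn⟩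
          rcases hn with rfl | rfl
          · exact ⟨0, rfl⟩
          · exact ⟨1, rfl⟩
      rw [← Matrix.det_submatrix_equiv_self (Equiv.ofBijective _ hb), Matrix.det_fin_two]
      simp [Matrix.toSquareBlockProp, Matrix.toBlock]
    · have : (N.toSquareBlockProp fun n => ¬ (n = o ∨ n = m)) =
          Matrix.diagonal (fun n : {n : ι // ¬ (n = o ∨ n = m)} => N n n) := by
        ext ⟨a, ha⟩ ⟨b, hb⟩
        by_cases hab : a = b
        · subst hab; simp [Matrix.toSquareBlockProp, Matrix.toBlock]
        · push Not at ha
          simp [Matrix.toSquareBlockProp, Matrix.toBlock, hab, Matrix.diagonal,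
            hN a ha.1 ha.2 b (Ne.symm hab)]
      rw [this, Matrix.det_diagonal]
  · intro i hi j hj
    push Not at hi
    apply hN i hi.1 hi.2
    rintro rfl
    rcases hj with h | h
    · exact hi.1 h
    · exact hi.2 h

/-- renormalised Floquet matrix -/
noncomputable def fiN {d : ℕ} {ι : Type*} [DecidableEq ι] (v : ι → Fin d → ℂ) (o m : ι)
    (x y u : Fin d → ℂ) (B : Matrix ι ι ℂ) (p : ℂ × ℂ) : Matrix ι ι ℂ := fun n n' =>
  if n = o ∨ n = m then
    (if n = n' then ∑ j, (v n j * (y j + p.2 * u j) +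
      p.1 * (v n j * (x j + p.1 * (y j + p.2 * u j)))⁻¹) else 0) + B n n'
  else
    (if n = n' then ∑ j, (v n j * x j + p.1 * (v n j * (y j + p.2 * u j)) +
      p.1 ^ 2 * (v n j * (x j + p.1 * (y j + p.2 * u j)))⁻¹) else 0) + p.1 * B n n'

theorem fiN_contDiffAt {d : ℕ} {ι : Type*} [Fintype ι] [DecidableEq ι] (v : ι → Fin d → ℂ)
    (hv : ∀ n j, v n j ≠ 0) (o m : ι)
    (x y u : Fin d → ℂ) (hx : ∀ j, x j ≠ 0) (B : Matrix ι ι ℂ) :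
    ContDiffAt ℂ 1 (fun p => (fiN v o m x y u B p).det) 0 := by
  have hinv : ∀ n j, ContDiffAt ℂ 1
      (fun p : ℂ × ℂ => (v n j * (x j + p.1 * (y j + p.2 * u j)))⁻¹) 0 := by
    intro n j
    apply ContDiffAt.inv
    · fun_prop
    · simp [hv n j, hx j]
  simp only [Matrix.det_apply]
  apply ContDiffAt.sum
  intro σ _
  apply ContDiffAt.const_smul
  apply contDiffAt_prod
  intro n _
  unfold fiN
  split_ifs
  · refine ContDiffAt.add (ContDiffAt.sum fun j _ => ?_) contDiffAt_const
    exact ContDiffAt.add (by fun_prop) (ContDiffAt.mul (by fun_prop) (hinv _ _))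
  · fun_prop
  · refine ContDiffAt.add (ContDiffAt.sum fun j _ => ?_) (by fun_prop)
    exact ContDiffAt.add (by fun_prop) (ContDiffAt.mul (by fun_prop) (hinv _ _))
  · fun_prop

theorem fiN_det_zero {d : ℕ} {ι : Type*} [Fintype ι] [DecidableEq ι] (v : ι → Fin d → ℂ)
    (o m : ι) (hom : o ≠ m)
    (x y u : Fin d → ℂ) (B : Matrix ι ι ℂ) (w : ℂ) :
    (fiN v o m x y u B (0, w)).det =
      ((∑ j, v o j * (y j + w * u j) + B o o) * (∑ j, v m j * (y j + w * u j) + B m m)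
        - B o m * B m o) * ∏ n : {n : ι // ¬ (n = o ∨ n = m)}, ∑ j, v n j * x j := by
  rw [fi_det_two _ o m hom]
  · congr 1
    · simp [fiN, hom, hom.symm]
    · apply Finset.prod_congr rfl
      intro n _
      simp [fiN, n.2]
  · intro n h1 h2 n' h3
    simp [fiN, h1, h2, h3.symm]

/-- Abstract Floquet matrix. -/
noncomputable def fiM {d : ℕ} {ι : Type*} [DecidableEq ι] (v : ι → Fin d → ℂ) (B : Matrix ι ι ℂ)
    (z : Fin d → ℂ) : Matrix ι ι ℂ := fun n n' =>
  (if n = n' then ∑ j, (v n j * z j + (v n j * z j)⁻¹) else 0) + B n n'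

theorem fiN_det_ne {d : ℕ} {ι : Type*} [Fintype ι] [DecidableEq ι] (v : ι → Fin d → ℂ)
    (o m : ι) (x y u : Fin d → ℂ) (hxo : ∑ j, v o j * x j = 0) (hxm : ∑ j, v m j * x j = 0)
    (B : Matrix ι ι ℂ) (p : ℂ × ℂ) (hp : p.1 ≠ 0) :
    (fiN v o m x y u B p).det =
      (∏ n, if n = o ∨ n = m then 1 else p.1) *
      (fiM v B (fun j => (x j + p.1 * (y j + p.2 * u j)) / p.1)).det := by
  rw [← Matrix.det_mul_column]
  congr 1
  ext n n'
  simp only [fiN, fiM, Matrix.of_apply]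
  split_ifs with h1 h2
  · have hx0 : ∑ j, v n j * x j = 0 := by
      rcases h1 with rfl | rfl <;> assumption
    rw [one_mul]
    congr 1
    have : ∑ j, v n j * x j / p.1 = 0 := by rw [← Finset.sum_div, hx0, zero_div]
    rw [← sub_eq_zero, ← Finset.sum_sub_distrib, ← neg_eq_zero, ← Finset.sum_neg_distrib, ← this]
    apply Finset.sum_congr rfl
    intro j _
    rw [← mul_div_assoc, inv_div]
    simp only [div_eq_mul_inv]
    generalize (v n j * (x j + p.1 * (y j + p.2 * u j)))⁻¹ = t
    field_simp
    ring
  · simp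
  · rw [mul_add, Finset.mul_sum]
    congr 1
    apply Finset.sum_congr rfl
    intro j _
    rw [← mul_div_assoc, inv_div]
    simp only [div_eq_mul_inv]
    generalize (v n j * (x j + p.1 * (y j + p.2 * u j)))⁻¹ = t
    field_simp
  · simp

theorem fi_core {d : ℕ} {ι : Type*} [Fintype ι] [DecidableEq ι] (v : ι → Fin d → ℂ)
    (hv : ∀ n j, v n j ≠ 0) (o m : ι) (hom : o ≠ m)
    (x u u' : Fin d → ℂ) (hx : ∀ j, x j ≠ 0)
    (hxo : ∑ j, v o j * x j = 0) (hxm : ∑ j, v m j * x j = 0)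
    (hxn : ∀ n, n ≠ o → n ≠ m → ∑ j, v n j * x j ≠ 0)
    (huo : ∑ j, v o j * u j = 0) (hum : ∑ j, v m j * u j = 1)
    (huo' : ∑ j, v o j * u' j = 1) (hum' : ∑ j, v m j * u' j = 0)
    (A B : Matrix ι ι ℂ)
    (hzero : ∀ z : Fin d → ℂ, (∀ j, z j ≠ 0) → (fiM v A z).det = 0 → (fiM v B z).det = 0)
    (s : ℂ) (hs : s ≠ 0) :
    (s - A o o + B o o) * (A o m * A m o / s - A m m + B m m) - B o m * B m o = 0 := by
  set α := s - A o o with hα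
  set β := A o m * A m o / s - A m m with hβ
  set y : Fin d → ℂ := fun j => α * u' j + β * u j with hy
  have hyo : ∀ w : ℂ, ∑ j, v o j * (y j + w * u j) = α := by
    intro w
    have : ∑ j, v o j * (y j + w * u j) =
        α * ∑ j, v o j * u' j + (β + w) * ∑ j, v o j * u j := by
      rw [Finset.mul_sum, Finset.mul_sum, ← Finset.sum_add_distrib]
      exact Finset.sum_congr rfl fun j _ => by simp only [hy]; ring
    rw [this, huo, huo']; ring
  have hym : ∀ w : ℂ, ∑ j, v m j * (y j + w * u j) = β + w := by
    intro w
    have : ∑ j, v m j * (y j + w * u j) =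
        α * ∑ j, v m j * u' j + (β + w) * ∑ j, v m j * u j := by
      rw [Finset.mul_sum, Finset.mul_sum, ← Finset.sum_add_distrib]
      exact Finset.sum_congr rfl fun j _ => by simp only [hy]; ring
    rw [this, hum, hum']; ring
  set C := ∏ n : {n : ι // ¬ (n = o ∨ n = m)}, ∑ j, v n j * x j with hC
  have hC0 : C ≠ 0 := by
    rw [hC, Finset.prod_ne_zero_iff]
    rintro ⟨n, hn⟩ _
    push Not at hn
    exact hxn n hn.1 hn.2
  have key := fi_persist (fun p => (fiN v o m x y u A p).det) (fun p => (fiN v o m x y u B p).det)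
    (fiN_contDiffAt v hv o m x y u hx A) (s * C) (mul_ne_zero hs hC0) ?_
    (fiN_contDiffAt v hv o m x y u hx B).continuousAt ?_
  · have h0 : (0 : ℂ × ℂ) = (0, 0) := rfl
    simp only [h0] at key
    rw [fiN_det_zero v o m hom, hyo, hym] at key
    have := (mul_eq_zero.1 key).resolve_right hC0
    simpa using this
  · intro w
    rw [fiN_det_zero v o m hom, hyo, hym, hα, hβ]
    field_simp
    ring
  · have hnz : ∀ᶠ p in nhds (0 : ℂ × ℂ), ∀ j, x j + p.1 * (y j + p.2 * u j) ≠ 0 := by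
      rw [Filter.eventually_all]
      intro j
      have : ContinuousAt (fun p : ℂ × ℂ => x j + p.1 * (y j + p.2 * u j)) 0 := by fun_prop
      apply this.eventually_ne
      simpa using hx j
    filter_upwards [hnz] with p hp h1 h2
    rw [fiN_det_ne v o m x y u hxo hxm _ p h1] at h2 ⊢
    have hpr : (∏ n, if n = o ∨ n = m then (1 : ℂ) else p.1) ≠ 0 := by
      rw [Finset.prod_ne_zero_iff]
      intro n _
      split_ifs
      · exact one_ne_zero
      · exact h1
    rw [hzero _ (fun j => div_ne_zero (hp j) h1) ((mul_eq_zero.1 h2).resolve_left hpr), mul_zero]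

theorem fi_core' {d : ℕ} {ι : Type*} [Fintype ι] [DecidableEq ι] (v : ι → Fin d → ℂ)
    (hv : ∀ n j, v n j ≠ 0) (o m : ι) (hom : o ≠ m) (ho : ∀ j, v o j = 1)
    (i1 i2 i3 : Fin d) (h12 : v m i1 ≠ v m i2) (h13 : v m i1 ≠ v m i3) (h23 : v m i2 ≠ v m i3)
    (hgen : ∀ n c e, (∀ j, v n j = c * v m j + e) → n = o ∨ n = m)
    (A B : Matrix ι ι ℂ)
    (hzero : ∀ z : Fin d → ℂ, (∀ j, z j ≠ 0) → (fiM v A z).det = 0 → (fiM v B z).det = 0)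
    (hA : ∀ n, A n n = A o o) (hB : ∀ n, B n n = B o o) (hBm : B o m * B m o = 0) :
    A o m * A m o = 0 := by
  have hsub : v m i1 - v m i2 ≠ 0 := sub_ne_zero.2 h12
  have hi12 : i1 ≠ i2 := by rintro rfl; exact h12 rfl
  set k := (v m i1 - v m i2)⁻¹ with hk
  set u : Fin d → ℂ := k • (Pi.single i1 1 - Pi.single i2 1) with hu
  set u' : Fin d → ℂ := k • (v m i1 • Pi.single i2 1 - v m i2 • Pi.single i1 1) with hu'
  have hf : ∀ (f : Fin d → ℂ), ∑ j, f j * u j = k * (f i1 - f i2) := by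
    intro f
    simp [hu, mul_sub, Finset.sum_sub_distrib, Pi.single_apply]
    ring
  have hf' : ∀ (f : Fin d → ℂ), ∑ j, f j * u' j = k * (v m i1 * f i2 - v m i2 * f i1) := by
    intro f
    simp [hu', mul_sub, Finset.sum_sub_distrib, Pi.single_apply]
    ring
  have huo : ∑ j, v o j * u j = 0 := by rw [hf, ho, ho]; ring
  have hum : ∑ j, v m j * u j = 1 := by rw [hf, hk]; field_simp
  have huo' : ∑ j, v o j * u' j = 1 := by rw [hf', ho, ho, hk]; field_simp
  have hum' : ∑ j, v m j * u' j = 0 := by rw [hf']; ring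
  clear_value u u'
  let L : (Fin d → ℂ) → Module.Dual ℂ (Fin d → ℂ) := fun f => Fintype.linearCombination ℂ f
  have hL : ∀ f t, L f t = ∑ j, f j * t j := by
    intro f t; simp [L, Fintype.linearCombination_apply, mul_comm]
  let K : Submodule ℂ (Fin d → ℂ) := LinearMap.ker (L (v o)) ⊓ LinearMap.ker (L (v m))
  have hspan : ∀ f : Fin d → ℂ, (∀ t ∈ K, ∑ j, f j * t j = 0) →
      ∃ c e : ℂ, ∀ j, f j = c * v m j + e := by
    intro f h
    refine ⟨∑ j, f j * u j, ∑ j, f j * u' j, fun j => ?_⟩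
    have hmem : (Pi.single j 1 - (v o j) • u' - (v m j) • u : Fin d → ℂ) ∈ K := by
      refine Submodule.mem_inf.2 ⟨?_, ?_⟩
      · rw [LinearMap.mem_ker, map_sub, map_sub, map_smul, map_smul, hL, hL, hL, huo, huo']
        simp [Pi.single_apply]
      · rw [LinearMap.mem_ker, map_sub, map_sub, map_smul, map_smul, hL, hL, hL, hum, hum']
        simp [Pi.single_apply]
    have := h _ hmem
    rw [← hL, map_sub, map_sub, map_smul, map_smul, hL, hL, hL, ho] at this
    have h1 : ∑ i, f i * (Pi.single j 1 : Fin d → ℂ) i = f j := by simp [Pi.single_apply]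
    rw [h1, smul_eq_mul, smul_eq_mul] at this
    linear_combination this
  obtain ⟨x, hxK, hx⟩ := Module.Dual.exists_forall_mem_ne_zero_of_forall_exists K
    (fun i : Fin d ⊕ {n : ι // n ≠ o ∧ n ≠ m} =>
      Sum.elim (fun j => L (Pi.single j 1)) (fun n => L (v n.1)) i) (by
    rintro (j | ⟨n, hn⟩)
    · by_contra! hcon
      obtain ⟨c, e, hce⟩ := hspan (Pi.single j 1) (fun t ht => by
        have := hcon t ht; rwa [Sum.elim_inl, hL] at this)
      -- two of the three indices differ from j
      have hc : c = 0 := by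
        have e1 := hce i1
        have e2 := hce i2
        have e3 := hce i3
        by_contra hc
        have hi13 : i1 ≠ i3 := by rintro rfl; exact h13 rfl
        have hi23 : i2 ≠ i3 := by rintro rfl; exact h23 rfl
        simp only [Pi.single_apply] at e1 e2 e3
        by_cases a1 : i1 = j
        · have a2 : i2 ≠ j := fun h => hi12 (a1.trans h.symm)
          have a3 : i3 ≠ j := fun h => hi13 (a1.trans h.symm)
          rw [if_neg a2] at e2
          rw [if_neg a3] at e3
          exact h23 (mul_left_cancel₀ hc (by linear_combination e3 - e2))
        · rw [if_neg a1] at e1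
          by_cases a2 : i2 = j
          · have a3 : i3 ≠ j := fun h => hi23 (a2.trans h.symm)
            rw [if_neg a3] at e3
            exact h13 (mul_left_cancel₀ hc (by linear_combination e3 - e1))
          · rw [if_neg a2] at e2
            exact h12 (mul_left_cancel₀ hc (by linear_combination e2 - e1))
      subst hc
      by_cases a1 : i1 = j
      · have e1 := hce i1
        have e2 := hce i2
        have a2 : i2 ≠ j := fun h => hi12 (a1.trans h.symm)
        simp [a1, a2] at e1 e2
        exact one_ne_zero (e1.trans e2.symm)
      · have e1 := hce i1
        have e2 := hce j
        simp [a1] at e1 e2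
        exact one_ne_zero (e2.trans e1.symm)
    · by_contra! hcon
      obtain ⟨c, e, hce⟩ := hspan (v n) (fun t ht => by
        have := hcon t ht; rwa [Sum.elim_inr, hL] at this)
      rcases hgen n c e hce with h | h
      · exact hn.1 h
      · exact hn.2 h)
  have hxj : ∀ j, x j ≠ 0 := by
    intro j
    have := hx (Sum.inl j)
    simpa [hL, Pi.single_apply] using this
  have hxn : ∀ n, n ≠ o → n ≠ m → ∑ j, v n j * x j ≠ 0 := by
    intro n h1 h2
    have := hx (Sum.inr ⟨n, h1, h2⟩)
    rwa [Sum.elim_inr, hL] at this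
  have hxo : ∑ j, v o j * x j = 0 := by rw [← hL]; exact hxK.1
  have hxm : ∑ j, v m j * x j = 0 := by rw [← hL]; exact hxK.2
  have key := fi_core v hv o m hom x u u' hxj hxo hxm hxn huo hum huo' hum' A B hzero
  rw [hBm, hA m, hB m] at key
  set δ := B o o - A o o with hδ
  set a := A o m * A m o with ha
  have key2 : ∀ s : ℂ, s ≠ 0 → s + δ ≠ 0 → a = - δ * s := by
    intro s hs hs2
    have := key s hs
    rw [sub_zero] at this
    rcases mul_eq_zero.1 this with h | h
    · exact absurd (by rw [← h, hδ]; ring) hs2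
    · field_simp at h
      rw [hδ]; linear_combination h
  obtain ⟨s, hs⟩ := (Set.toFinite ({0, -δ, -δ/2} : Set ℂ)).infinite_compl.nonempty
  simp only [Set.mem_compl_iff, Set.mem_insert_iff, Set.mem_singleton_iff, not_or] at hs
  have k1 := key2 s hs.1 (fun h => hs.2.1 (by linear_combination h))
  have k2 := key2 (2 * s) (mul_ne_zero two_ne_zero hs.1)
    (fun h => hs.2.2 (by linear_combination h / 2))
  linear_combination 2 * k1 - k2

theorem fi_rho_zero (d : ℕ) (q : Fin d → ℕ) (j : Fin d) : rho d q j 0 = 1 := by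
  simp [rho]

theorem fi_rho_ne (d : ℕ) (q : Fin d → ℕ) (j : Fin d) (a : ℤ) : rho d q j a ≠ 0 :=
  Complex.exp_ne_zero _

theorem fi_rho_add (d : ℕ) (q : Fin d → ℕ) (j : Fin d) (a b : ℤ) :
    rho d q j (a + b) = rho d q j a * rho d q j b := by
  unfold rho
  rw [← Complex.exp_add]
  congr 1
  push_cast
  ring

theorem fi_rho_neg (d : ℕ) (q : Fin d → ℕ) (j : Fin d) (a : ℤ) :
    rho d q j (-a) = (rho d q j a)⁻¹ := by
  apply eq_inv_of_mul_eq_one_left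
  rw [← fi_rho_add, neg_add_cancel, fi_rho_zero]

theorem fi_rho_conj (d : ℕ) (q : Fin d → ℕ) (j : Fin d) (a : ℤ) :
    (starRingEnd ℂ) (rho d q j a) = rho d q j (-a) := by
  unfold rho
  rw [← Complex.exp_conj]
  congr 1
  simp [Complex.conj_ofNat]

theorem fi_rho_mul_conj (d : ℕ) (q : Fin d → ℕ) (j : Fin d) (a : ℤ) :
    rho d q j a * (starRingEnd ℂ) (rho d q j a) = 1 := by
  rw [fi_rho_conj, ← fi_rho_add, add_neg_cancel, fi_rho_zero]

theorem fi_rho_nat_mul (d : ℕ) (q : Fin d → ℕ) (j : Fin d) (k : ℕ) (a : ℤ) :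
    rho d q j (k * a) = rho d q j a ^ k := by
  unfold rho
  rw [← Complex.exp_nat_mul]
  congr 1
  push_cast
  ring

theorem fi_rho_eq_one_iff (d : ℕ) (q : Fin d → ℕ) (hq : ∀ j, 0 < q j) (j : Fin d) (a : ℤ) :
    rho d q j a = 1 ↔ (q j : ℤ) ∣ a := by
  have hq0 : (q j : ℂ) ≠ 0 := by exact_mod_cast (hq j).ne'
  unfold rho
  rw [Complex.exp_eq_one_iff]
  constructor
  · rintro ⟨n, hn⟩
    refine ⟨n, ?_⟩
    have h2 := Complex.two_pi_I_ne_zero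
    have h3 : (a : ℂ) = (q j : ℂ) * n := by
      rw [div_eq_iff hq0] at hn
      apply mul_left_cancel₀ h2
      linear_combination hn
    exact_mod_cast h3
  · rintro ⟨n, rfl⟩
    refine ⟨n, ?_⟩
    push_cast
    field_simp

theorem fi_rho_congr (d : ℕ) (q : Fin d → ℕ) (hq : ∀ j, 0 < q j) (j : Fin d) (a b : ℤ)
    (h : (q j : ℤ) ∣ a - b) : rho d q j a = rho d q j b := by
  have := (fi_rho_eq_one_iff d q hq j (a - b)).2 h
  have h2 : a = (a - b) + b := by ring
  rw [h2, fi_rho_add, this, one_mul]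

theorem fi_rho_pow (d : ℕ) (q : Fin d → ℕ) (hq : ∀ j, 0 < q j) (j : Fin d) (a : ℤ) :
    rho d q j a ^ q j = 1 := by
  rw [← fi_rho_nat_mul, fi_rho_eq_one_iff d q hq]
  exact dvd_mul_right _ _

theorem fi_rho_inj (d : ℕ) (q : Fin d → ℕ) (hq : ∀ j, 0 < q j) (j : Fin d) (a b : Fin (q j))
    (h : rho d q j (a : ℕ) = rho d q j (b : ℕ)) : a = b := by
  have h1 : rho d q j ((a : ℕ) - (b : ℕ) : ℤ) = 1 := by
    rw [sub_eq_add_neg, fi_rho_add, fi_rho_neg, h, mul_inv_cancel₀ (fi_rho_ne _ _ _ _)]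
  rw [fi_rho_eq_one_iff d q hq] at h1
  have ha := a.2
  have hb := b.2
  have h2 := Int.eq_zero_of_abs_lt_dvd h1 (by rw [abs_lt]; constructor <;> omega)
  apply Fin.ext
  omega

theorem fi_dft_eq (d : ℕ) (q : Fin d → ℕ) (V : (Fin d → ℤ) → ℝ) (l : Fin d → ℤ) :
    dft d q V l = (1 / ∏ j, (q j : ℂ)) *
      ∑ n : Cell d q, (V (fun j => ((n j : ℕ) : ℤ)) : ℂ) *
        ∏ j, rho d q j (-(l j * ((n j : ℕ) : ℤ))) := by
  unfold dft
  congr 1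
  apply Finset.sum_congr rfl
  intro n _
  congr 1
  unfold rho
  rw [← Complex.exp_sum, Finset.mul_sum]
  congr 1
  apply Finset.sum_congr rfl
  intro j _
  push_cast
  ring

theorem fi_dft_conj (d : ℕ) (q : Fin d → ℕ) (V : (Fin d → ℤ) → ℝ) (l : Fin d → ℤ) :
    (starRingEnd ℂ) (dft d q V l) = dft d q V (fun j => - l j) := by
  rw [fi_dft_eq, fi_dft_eq]
  simp [map_sum, map_prod, fi_rho_conj]

theorem fi_affine (c e v1 v2 v3 w1 w2 w3 : ℂ) (h12 : v1 ≠ v2) (h13 : v1 ≠ v3) (h23 : v2 ≠ v3)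
    (hv1 : v1 * (starRingEnd ℂ) v1 = 1) (hv2 : v2 * (starRingEnd ℂ) v2 = 1)
    (hv3 : v3 * (starRingEnd ℂ) v3 = 1)
    (hw1 : w1 * (starRingEnd ℂ) w1 = 1) (hw2 : w2 * (starRingEnd ℂ) w2 = 1)
    (hw3 : w3 * (starRingEnd ℂ) w3 = 1)
    (h1 : w1 = c * v1 + e) (h2 : w2 = c * v2 + e) (h3 : w3 = c * v3 + e) : c = 0 ∨ e = 0 := by
  have quad : ∀ v w : ℂ, v * (starRingEnd ℂ) v = 1 → w * (starRingEnd ℂ) w = 1 → w = c * v + e →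
      c * (starRingEnd ℂ) e * v ^ 2 + (c * (starRingEnd ℂ) c + e * (starRingEnd ℂ) e - 1) * v
        + e * (starRingEnd ℂ) c = 0 := by
    intro v w hv hw h
    subst h
    simp only [map_add, map_mul] at hw
    linear_combination v * hw - (starRingEnd ℂ) c * (c * v + e) * hv
  have q1 := quad v1 w1 hv1 hw1 h1
  have q2 := quad v2 w2 hv2 hw2 h2
  have q3 := quad v3 w3 hv3 hw3 h3
  set k := c * (starRingEnd ℂ) e
  set b := c * (starRingEnd ℂ) c + e * (starRingEnd ℂ) e - 1
  have r1 : k * (v1 + v2) + b = 0 := by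
    apply mul_left_cancel₀ (sub_ne_zero.2 h12)
    linear_combination q1 - q2
  have r2 : k * (v1 + v3) + b = 0 := by
    apply mul_left_cancel₀ (sub_ne_zero.2 h13)
    linear_combination q1 - q3
  have r3 : k = 0 := by
    apply mul_right_cancel₀ (sub_ne_zero.2 h23)
    linear_combination r1 - r2
  rcases mul_eq_zero.1 r3 with h | h
  · exact Or.inl h
  · right; simpa using h

theorem fi_coprime_one (d : ℕ) (q : Fin d → ℕ)
    (hco : ∀ i j : Fin d, i ≠ j → Nat.Coprime (q i) (q j)) (i j : Fin d) (hij : i ≠ j) (c : ℂ)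
    (h1 : c ^ q i = 1) (h2 : c ^ q j = 1) : c = 1 := by
  have := pow_gcd_eq_one.2 ⟨h1, h2⟩
  rwa [hco i j hij, pow_one] at this

theorem fi_dft_zero_of_sep (d : ℕ) (q : Fin d → ℕ) (hq : ∀ j, 0 < q j)
    (f : (Fin d → ℤ) → ℂ) (k : Fin d) (hf : ∀ n n' : Fin d → ℤ, (∀ j, j ≠ k → n j = n' j) → f n = f n')
    (l : Fin d → ℤ) (hl : ¬ (q k : ℤ) ∣ l k) :
    ∑ n : Cell d q, f (fun j => ((n j : ℕ) : ℤ)) *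
        ∏ j, rho d q j (-(l j * ((n j : ℕ) : ℤ))) = 0 := by
  have : ∀ j, NeZero (q j) := fun j => ⟨(hq j).ne'⟩
  set S := ∑ n : Cell d q, f (fun j => ((n j : ℕ) : ℤ)) *
        ∏ j, rho d q j (-(l j * ((n j : ℕ) : ℤ))) with hS
  let c : Cell d q := fun j => if j = k then Fin.ofNat (q j) 1 else Fin.ofNat (q j) 0
  let σ : Cell d q ≃ Cell d q := Equiv.piCongrRight fun j => Equiv.addRight (c j)
  have hval : ∀ n j, (q j : ℤ) ∣ (((σ n j : Fin (q j)) : ℕ) : ℤ) -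
      (((n j : ℕ) : ℤ) + if j = k then 1 else 0) := by
    intro n j
    have : ((σ n j : Fin (q j)) : ℕ) = ((n j : ℕ) + (c j : ℕ)) % q j := by
      simp [σ, Fin.val_add]
    rw [this]
    have hc : (c j : ℕ) = (if j = k then 1 else 0) % q j := by
      simp only [c]; split_ifs <;> simp
    rw [hc, Nat.add_mod_mod]
    push_cast
    rw [dvd_sub_comm]
    exact Int.dvd_self_sub_emod
  have hshift : S = rho d q k (-(l k)) * S := by
    rw [hS, Finset.mul_sum]
    rw [← Equiv.sum_comp σ]
    apply Finset.sum_congr rfl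
    intro n _
    have e1 : f (fun j => (((σ n j : Fin (q j)) : ℕ) : ℤ)) = f (fun j => ((n j : ℕ) : ℤ)) := by
      apply hf
      intro j hj
      have : ((σ n j : Fin (q j)) : ℕ) = (n j : ℕ) := by
        simp [σ, c, hj]
      rw [this]
    have e2 : ∏ j, rho d q j (-(l j * (((σ n j : Fin (q j)) : ℕ) : ℤ))) =
        rho d q k (-(l k)) * ∏ j, rho d q j (-(l j * ((n j : ℕ) : ℤ))) := by
      have : rho d q k (-(l k)) = ∏ j, rho d q j (-(l j * if j = k then 1 else 0)) := by
        rw [Finset.prod_eq_single k]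
        · simp
        · intro j _ hj; simp [hj, fi_rho_zero]
        · simp
      rw [this, ← Finset.prod_mul_distrib]
      apply Finset.prod_congr rfl
      intro j _
      rw [← fi_rho_add]
      apply fi_rho_congr d q hq
      obtain ⟨t, ht⟩ := hval n j
      refine ⟨-(l j * t), ?_⟩
      linear_combination -(l j) * ht
    rw [e1, e2]; ring
  have hne : rho d q k (-(l k)) ≠ 1 := by
    rw [Ne, fi_rho_eq_one_iff d q hq]
    simpa using hl
  have : (rho d q k (-(l k)) - 1) * S = 0 := by linear_combination -hshift
  exact (mul_eq_zero.1 this).resolve_left (sub_ne_zero.2 hne)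

theorem fi_orth (d : ℕ) (q : Fin d → ℕ) (hq : ∀ j, 0 < q j) (j : Fin d) (t : ℤ) :
    ∑ a : Fin (q j), rho d q j (((a : ℕ) : ℤ) * t) = if (q j : ℤ) ∣ t then (q j : ℂ) else 0 := by
  simp only [fi_rho_nat_mul]
  rw [Fin.sum_univ_eq_sum_range (fun a => rho d q j t ^ a)]
  split_ifs with h
  · rw [(fi_rho_eq_one_iff d q hq j t).2 h]; simp
  · have hne : rho d q j t ≠ 1 := by rwa [Ne, fi_rho_eq_one_iff d q hq]
    have := geom_sum_mul (rho d q j t) (q j)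
    rw [fi_rho_pow d q hq, sub_self] at this
    exact (mul_eq_zero.1 this).resolve_right (sub_ne_zero.2 hne)

theorem fi_inversion (d : ℕ) (q : Fin d → ℕ) (hq : ∀ j, 0 < q j) (V : (Fin d → ℤ) → ℝ)
    (hV : IsPeriodicPotential d q V) (n : Fin d → ℤ) :
    (V n : ℂ) = ∑ m : Cell d q, dft d q V (fun j => ((m j : ℕ) : ℤ)) *
      ∏ j, rho d q j (((m j : ℕ) : ℤ) * n j) := by
  have hlt : ∀ j, (n j % (q j : ℤ)).toNat < q j := by
    intro j
    have h1 := Int.emod_nonneg (n j) (by exact_mod_cast (hq j).ne' : (q j : ℤ) ≠ 0)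
    have h2 := Int.emod_lt_of_pos (n j) (by exact_mod_cast hq j : (0 : ℤ) < q j)
    omega
  let n0 : Cell d q := fun j => ⟨(n j % (q j : ℤ)).toNat, hlt j⟩
  have hn0 : ∀ j, ((n0 j : ℕ) : ℤ) = n j % (q j : ℤ) := by
    intro j
    exact Int.toNat_of_nonneg
      (Int.emod_nonneg (n j) (by exact_mod_cast (hq j).ne' : (q j : ℤ) ≠ 0))
  have hVn : V (fun j => ((n0 j : ℕ) : ℤ)) = V n := by
    have := hV (fun j => ((n0 j : ℕ) : ℤ)) (fun j => n j - ((n0 j : ℕ) : ℤ)) (fun j => by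
      rw [hn0]; exact Int.dvd_self_sub_emod)
    rw [← this]
    congr 1
    funext j
    simp
  have hdvd : ∀ (n' : Cell d q) j, (q j : ℤ) ∣ n j - ((n' j : ℕ) : ℤ) ↔ n' j = n0 j := by
    intro n' j
    constructor
    · intro h
      have h1 : (q j : ℤ) ∣ ((n0 j : ℕ) : ℤ) - ((n' j : ℕ) : ℤ) := by
        have h2 : (q j : ℤ) ∣ n j - ((n0 j : ℕ) : ℤ) := by rw [hn0]; exact Int.dvd_self_sub_emod
        have := dvd_sub h h2
        simpa using this
      have := fi_rho_congr d q hq j _ _ h1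
      exact (fi_rho_inj d q hq j _ _ this).symm
    · intro h
      rw [h, hn0]; exact Int.dvd_self_sub_emod
  have hQ : (∏ j, (q j : ℂ)) ≠ 0 := by
    rw [Finset.prod_ne_zero_iff]
    intro j _
    exact_mod_cast (hq j).ne'
  symm
  calc ∑ m : Cell d q, dft d q V (fun j => ((m j : ℕ) : ℤ)) *
      ∏ j, rho d q j (((m j : ℕ) : ℤ) * n j)
      = (1 / ∏ j, (q j : ℂ)) * ∑ m : Cell d q, ∑ n' : Cell d q,
          (V (fun j => ((n' j : ℕ) : ℤ)) : ℂ) *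
            ∏ j, rho d q j (((m j : ℕ) : ℤ) * (n j - ((n' j : ℕ) : ℤ))) := by
        rw [Finset.mul_sum]
        apply Finset.sum_congr rfl
        intro m _
        rw [fi_dft_eq, mul_assoc, Finset.sum_mul]
        congr 1
        apply Finset.sum_congr rfl
        intro n' _
        rw [mul_assoc, ← Finset.prod_mul_distrib]
        congr 1
        apply Finset.prod_congr rfl
        intro j _
        rw [← fi_rho_add]
        congr 1
        ring
    _ = (1 / ∏ j, (q j : ℂ)) * ∑ n' : Cell d q, (V (fun j => ((n' j : ℕ) : ℤ)) : ℂ) *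
            ∏ j, if n' j = n0 j then (q j : ℂ) else 0 := by
        congr 1
        rw [Finset.sum_comm]
        apply Finset.sum_congr rfl
        intro n' _
        rw [← Finset.mul_sum]
        congr 1
        rw [← Fintype.prod_sum (fun j (a : Fin (q j)) =>
          rho d q j (((a : ℕ) : ℤ) * (n j - ((n' j : ℕ) : ℤ))))]
        apply Finset.prod_congr rfl
        intro j _
        rw [fi_orth d q hq]
        simp only [hdvd]
    _ = (V n : ℂ) := by
        rw [Finset.sum_eq_single n0]
        · simp only [if_true]
          rw [hVn]
          field_simp
        · intro n' _ hne
          obtain ⟨j, hj⟩ := Function.ne_iff.1 hne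
          rw [Finset.prod_eq_zero (Finset.mem_univ j) (if_neg hj), mul_zero]
        · simp

theorem fi_block_lt {r d : ℕ} (D : Fin r → ℕ) (hsum : ∑ j, D j = d) (j j' : Fin r)
    (i : Fin (D j)) (i' : Fin (D j')) (h : j < j') :
    blockEmbed D hsum j i < blockEmbed D hsum j' i' := by
  have hj : j ∉ Finset.univ.filter (fun k => k < j) := by simp
  have h2 : (∑ k ∈ Finset.univ.filter (fun k => k < j), D k) + D j ≤
      ∑ k ∈ Finset.univ.filter (fun k => k < j'), D k := by
    calc (∑ k ∈ Finset.univ.filter (fun k => k < j), D k) + D j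
        = ∑ k ∈ insert j (Finset.univ.filter (fun k => k < j)), D k := by
          rw [Finset.sum_insert hj, add_comm]
      _ ≤ _ := by
          apply Finset.sum_le_sum_of_subset
          intro k hk
          simp only [Finset.mem_insert, Finset.mem_filter, Finset.mem_univ, true_and] at hk ⊢
          rcases hk with rfl | hk
          · exact h
          · exact hk.trans h
  have h3 := i.2
  rw [Fin.lt_def]
  simp only [blockEmbed]
  omega

theorem fi_block_inj {r d : ℕ} (D : Fin r → ℕ) (hsum : ∑ j, D j = d) :
    Function.Injective (fun p : (j : Fin r) × Fin (D j) => blockEmbed D hsum p.1 p.2) := by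
  rintro ⟨j, i⟩ ⟨j', i'⟩ h
  simp only at h
  rcases lt_trichotomy j j' with hlt | rfl | hlt
  · exact absurd h (fi_block_lt D hsum j j' i i' hlt).ne
  · have : i = i' := by
      apply Fin.ext
      have := congrArg Fin.val h
      simpa [blockEmbed] using this
    rw [this]
  · exact absurd h (fi_block_lt D hsum j' j i' i hlt).ne'

theorem fi_block_surj {r d : ℕ} (D : Fin r → ℕ) (hsum : ∑ j, D j = d) (k : Fin d) :
    ∃ j i, blockEmbed D hsum j i = k := by
  have hb : Function.Bijective
      (fun p : (j : Fin r) × Fin (D j) => blockEmbed D hsum p.1 p.2) := by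
    rw [Fintype.bijective_iff_injective_and_card]
    exact ⟨fi_block_inj D hsum, by simp [hsum]⟩
  obtain ⟨⟨j, i⟩, h⟩ := hb.2 k
  exact ⟨j, i, h⟩

theorem fi_floquet_eq (d : ℕ) (q : Fin d → ℕ) (V : (Fin d → ℤ) → ℝ) (z : Fin d → ℂ) (lam : ℂ) :
    floquetDet d q V z lam = (fiM (fun (n : Cell d q) j => rho d q j (n j : ℕ))
      (fun n n' => dft d q V (fun j => ((n j : ℕ) : ℤ) - ((n' j : ℕ) : ℤ)) -
        if n = n' then lam else 0) z).det := by
  unfold floquetDet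
  congr 1
  ext n n'
  simp only [floquetMatrix, fiM, Matrix.sub_apply, Matrix.smul_apply, Matrix.one_apply,
    smul_eq_mul, mul_ite, mul_one, mul_zero]
  ring

/-- If `m` has two nonzero coordinates and `Ŷ(m) = 0`, then `V̂(m) = 0`. -/
theorem fi_dft_transfer (d : ℕ) (hd : 3 ≤ d) (q : Fin d → ℕ) (hq : ∀ j, 0 < q j)
    (hco : ∀ i j : Fin d, i ≠ j → Nat.Coprime (q i) (q j))
    (V Y : (Fin d → ℤ) → ℝ) (hFermi : FermiIsospectral d q V Y)
    (m : Cell d q) (k1 k2 : Fin d) (hk : k1 ≠ k2) (h1 : (m k1 : ℕ) ≠ 0) (h2 : (m k2 : ℕ) ≠ 0)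
    (hY : dft d q Y (fun j => ((m j : ℕ) : ℤ)) = 0) :
    dft d q V (fun j => ((m j : ℕ) : ℤ)) = 0 := by
  obtain ⟨lam, hF⟩ := hFermi
  obtain ⟨k3, h31, h32⟩ : ∃ k3 : Fin d, k3 ≠ k1 ∧ k3 ≠ k2 := by
    have : ∃ k ∈ (Finset.univ : Finset (Fin d)), k ∉ ({k1, k2} : Finset (Fin d)) := by
      apply Finset.exists_mem_notMem_of_card_lt_card
      rw [Finset.card_univ, Fintype.card_fin]
      exact lt_of_le_of_lt Finset.card_le_two (by omega)
    obtain ⟨k, _, hk'⟩ := this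
    simp only [Finset.mem_insert, Finset.mem_singleton, not_or] at hk'
    exact ⟨k, hk'.1, hk'.2⟩
  let o : Cell d q := fun j => ⟨0, hq j⟩
  let v : Cell d q → Fin d → ℂ := fun n j => rho d q j (n j : ℕ)
  have hone : ∀ (n : Cell d q) j, v n j = 1 → (n j : ℕ) = 0 := by
    intro n j h
    have : rho d q j (n j : ℕ) = rho d q j ((⟨0, hq j⟩ : Fin (q j)) : ℕ) := by
      have h0 : rho d q j (((⟨0, hq j⟩ : Fin (q j)) : ℕ) : ℤ) = 1 := by
        simpa using fi_rho_zero d q j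
      rw [h0]; exact h
    have := fi_rho_inj d q hq j _ _ this
    rw [this]
  have hdist : ∀ i j, i ≠ j → (m i : ℕ) ≠ 0 → v m i ≠ v m j := by
    intro i j hij hi heq
    apply hi
    apply hone
    apply fi_coprime_one d q hco i j hij
    · exact fi_rho_pow d q hq _ _
    · rw [heq]; exact fi_rho_pow d q hq _ _
  have hom : o ≠ m := by
    intro h
    apply h1
    rw [← h]
  have hgen : ∀ n c e, (∀ j, v n j = c * v m j + e) → n = o ∨ n = m := by
    intro n c e h
    rcases fi_affine c e (v m k1) (v m k2) (v m k3) (v n k1) (v n k2) (v n k3)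
      (hdist _ _ hk h1) (hdist _ _ h31.symm h1) (hdist _ _ h32.symm h2)
      (fi_rho_mul_conj _ _ _ _) (fi_rho_mul_conj _ _ _ _) (fi_rho_mul_conj _ _ _ _)
      (fi_rho_mul_conj _ _ _ _) (fi_rho_mul_conj _ _ _ _) (fi_rho_mul_conj _ _ _ _)
      (h k1) (h k2) (h k3) with hc | he
    · left
      subst hc
      have he : e = 1 := by
        apply fi_coprime_one d q hco k1 k2 hk
        · have := h k1
          rw [zero_mul, zero_add] at this
          rw [← this]; exact fi_rho_pow d q hq _ _
        · have := h k2
          rw [zero_mul, zero_add] at this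
          rw [← this]; exact fi_rho_pow d q hq _ _
      funext j
      apply Fin.ext
      apply hone
      rw [h j, he]; ring
    · right
      subst he
      have hpow : ∀ j, c ^ q j = 1 := by
        intro j
        have := h j
        have h3 : v n j ^ q j = 1 := fi_rho_pow d q hq _ _
        have h4 : v m j ^ q j = 1 := fi_rho_pow d q hq _ _
        rwa [this, add_zero, mul_pow, h4, mul_one] at h3
      have hc : c = 1 := fi_coprime_one d q hco k1 k2 hk c (hpow _) (hpow _)
      funext j
      apply fi_rho_inj d q hq
      have := h j
      rwa [hc, one_mul, add_zero] at this
  have key := fi_core' v (fun n j => fi_rho_ne _ _ _ _) o m hom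
    (fun j => by simpa [v, o] using fi_rho_zero d q j) k1 k2 k3
    (hdist _ _ hk h1) (hdist _ _ h31.symm h1) (hdist _ _ h32.symm h2) hgen
    (fun n n' => dft d q V (fun j => ((n j : ℕ) : ℤ) - ((n' j : ℕ) : ℤ)) -
        if n = n' then lam else 0)
    (fun n n' => dft d q Y (fun j => ((n j : ℕ) : ℤ) - ((n' j : ℕ) : ℤ)) -
        if n = n' then lam else 0)
    (by
      intro z hz h
      rw [← fi_floquet_eq] at h ⊢
      have : z ∈ {z : Fin d → ℂ | (∀ j, z j ≠ 0) ∧ floquetDet d q V z lam = 0} := ⟨hz, h⟩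
      rw [hF] at this
      exact this.2)
    (by intro n; simp) (by intro n; simp)
    (by simp [hom.symm, o, hY])
  simp only [hom, hom.symm, if_false, sub_zero] at key
  have e1 : (fun j => ((o j : ℕ) : ℤ) - ((m j : ℕ) : ℤ)) = fun j => -((m j : ℕ) : ℤ) := by
    funext j; simp [o]
  have e2 : (fun j => ((m j : ℕ) : ℤ) - ((o j : ℕ) : ℤ)) = fun j => ((m j : ℕ) : ℤ) := by
    funext j; simp [o]
  rw [e1, e2, ← fi_dft_conj] at key
  rcases mul_eq_zero.1 key with h | h
  · simpa using h
  · exact h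

/-- Theorem 1.3: if `V` and `Y` are Fermi isospectral and `Y` is
`(d₁,…,d_r)` separable, then `V` is `(d₁,…,d_r)` separable. -/
theorem fermi_isospectral_of_separable_is_separable
    (d r : ℕ) (hd : 3 ≤ d) (hr : 2 ≤ r)
    (q : Fin d → ℕ) (hq : ∀ j, 0 < q j)
    (hco : ∀ i j : Fin d, i ≠ j → Nat.Coprime (q i) (q j))
    (D : Fin r → ℕ) (hD : ∀ j, 1 ≤ D j) (hsum : ∑ j, D j = d)
    (V Y : (Fin d → ℤ) → ℝ)
    (hVper : IsPeriodicPotential d q V) (hYper : IsPeriodicPotential d q Y)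
    (hFermi : FermiIsospectral d q V Y)
    (hYsep : IsSeparablePotential d D hsum Y) :
    IsSeparablePotential d D hsum V := by
  have hYzero : ∀ (m : Cell d q) (j1 j2 : Fin r) (i1 : Fin (D j1)) (i2 : Fin (D j2)), j1 ≠ j2 →
      (m (blockEmbed D hsum j1 i1) : ℕ) ≠ 0 → (m (blockEmbed D hsum j2 i2) : ℕ) ≠ 0 →
      dft d q Y (fun j => ((m j : ℕ) : ℤ)) = 0 := by
    intro m j1 j2 i1 i2 hj h1 h2
    obtain ⟨Yj, hYj⟩ := hYsep
    rw [fi_dft_eq]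
    simp only [hYj, Complex.ofReal_sum, Finset.sum_mul]
    rw [Finset.sum_comm, Finset.sum_eq_zero, mul_zero]
    intro j _
    have hnd : ∀ k : Fin d, (m k : ℕ) ≠ 0 → ¬ (q k : ℤ) ∣ ((m k : ℕ) : ℤ) := by
      intro k hk hdvd
      exact hk (Nat.eq_zero_of_dvd_of_lt (by exact_mod_cast hdvd) (m k).2)
    obtain ⟨k, hk0, hk⟩ : ∃ k : Fin d, (m k : ℕ) ≠ 0 ∧ ∀ i, blockEmbed D hsum j i ≠ k := by
      by_cases hj1 : j = j1
      · refine ⟨_, h2, fun i h => ?_⟩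
        have := @fi_block_inj r d D hsum ⟨j, i⟩ ⟨j2, i2⟩ h
        exact hj (hj1.symm.trans (congrArg Sigma.fst this))
      · refine ⟨_, h1, fun i h => ?_⟩
        have := @fi_block_inj r d D hsum ⟨j, i⟩ ⟨j1, i1⟩ h
        exact hj1 (congrArg Sigma.fst this)
    exact fi_dft_zero_of_sep d q hq
      (fun n => ((Yj j (fun i => n (blockEmbed D hsum j i)) : ℝ) : ℂ)) k (by
        intro n n' h
        have : (fun i => n (blockEmbed D hsum j i)) = fun i => n' (blockEmbed D hsum j i) := by
          funext i
          exact h _ (hk i)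
        simp only [this]) _ (hnd k hk0)
  have hb : ∀ m : Cell d q, ∃ j : Fin r, dft d q V (fun j => ((m j : ℕ) : ℤ)) = 0 ∨
      ∀ k : Fin d, (m k : ℕ) ≠ 0 → ∃ i, blockEmbed D hsum j i = k := by
    intro m
    by_cases h0 : ∀ k, (m k : ℕ) = 0
    · exact ⟨⟨0, by omega⟩, Or.inr fun k hk => absurd (h0 k) hk⟩
    · push Not at h0
      obtain ⟨k1, hk1⟩ := h0
      obtain ⟨j1, i1, rfl⟩ := fi_block_surj D hsum k1
      refine ⟨j1, ?_⟩
      by_cases h3 : ∀ k : Fin d, (m k : ℕ) ≠ 0 → ∃ i, blockEmbed D hsum j1 i = k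
      · exact Or.inr h3
      · left
        push Not at h3
        obtain ⟨k2, hk2, hne⟩ := h3
        obtain ⟨j2, i2, rfl⟩ := fi_block_surj D hsum k2
        have hj : j1 ≠ j2 := by
          rintro rfl
          exact hne i2 rfl
        exact fi_dft_transfer d hd q hq hco V Y hFermi m _ _ (hne i1) hk1 hk2
          (hYzero m j1 j2 i1 i2 hj hk1 hk2)
  choose b hb using hb
  refine ⟨fun j t => (∑ m ∈ Finset.univ.filter (fun m : Cell d q => b m = j),
    dft d q V (fun j => ((m j : ℕ) : ℤ)) *
      ∏ i : Fin (D j), rho d q (blockEmbed D hsum j i)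
        (((m (blockEmbed D hsum j i) : ℕ) : ℤ) * t i)).re, fun n => ?_⟩
  rw [← Complex.re_sum, ← Complex.ofReal_re (V n)]
  congr 1
  rw [fi_inversion d q hq V hVper n, ← Finset.sum_fiberwise Finset.univ b]
  apply Finset.sum_congr rfl
  intro j _
  apply Finset.sum_congr rfl
  intro m hm
  have hm' : b m = j := by simpa using hm
  subst hm'
  rcases hb m with h | h
  · rw [h, zero_mul, zero_mul]
  · congr 1
    symm
    apply Fintype.prod_of_injective (fun i => blockEmbed D hsum (b m) i)
    · intro i i' hii
      have := @fi_block_inj r d D hsum ⟨b m, i⟩ ⟨b m, i'⟩ hii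
      simpa using this
    · intro k hk
      have : (m k : ℕ) = 0 := by
        by_contra hne
        obtain ⟨i, hi⟩ := h k hne
        exact hk ⟨i, hi⟩
      rw [this]
      simpa using fi_rho_zero d q k
    · intro i
      rfl

end
end

section
/- Let d ≥ 3 and let q_1, …, q_d be pairwise coprime positive integers. Assume the Γ-periodic potentials V, Y : ℤ^d → ℝ are Fermi isospectral, and that both V = ⊕_{j=1}^r V_j and Y = ⊕_{j=1}^r Y_j are (d_1,…,d_r) separable. Then for each j = 1,…,r there exists a constant C_j ∈ ℝ such that V_j + C_j and Y_j are Floquet isospectral as Γ_j-periodic potentials on ℤ^{d_j}. -/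
open scoped BigOperators
open Complex

noncomputable section

namespace FermiAux

section MatrixPart

variable {N : Type*} [Fintype N] [DecidableEq N]

/-- `x` is an eigenvalue of `M`. -/
def IsEig (M : Matrix N N ℂ) (x : ℂ) : Prop := (M - x • (1 : Matrix N N ℂ)).det = 0

lemma det_sub_eq_charpoly (M : Matrix N N ℂ) (x : ℂ) :
    (M - x • (1 : Matrix N N ℂ)).det = (-1) ^ Fintype.card N * M.charpoly.eval x := by
  rw [Matrix.eval_charpoly, ← Matrix.det_neg]
  congr 1
  simp [Matrix.smul_one_eq_diagonal, Matrix.scalar_apply]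

lemma isEig_iff_root (M : Matrix N N ℂ) (x : ℂ) : IsEig M x ↔ M.charpoly.eval x = 0 := by
  rw [IsEig, det_sub_eq_charpoly]
  simp

lemma isEig_iff_vec (M : Matrix N N ℂ) (x : ℂ) :
    IsEig M x ↔ ∃ v : N → ℂ, v ≠ 0 ∧ M.mulVec v = x • v := by
  rw [IsEig, ← Matrix.exists_mulVec_eq_zero_iff]
  simp only [Matrix.sub_mulVec, Matrix.smul_mulVec, Matrix.one_mulVec, sub_eq_zero]

lemma charpoly_eq_of_inj (M : Matrix N N ℂ) (f : N → ℂ) (hf : Function.Injective f)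
    (h : ∀ n, IsEig M (f n)) :
    M.charpoly = ∏ n, (Polynomial.X - Polynomial.C (f n)) := by
  have hm := M.charpoly_monic
  have hm' : (∏ n, (Polynomial.X - Polynomial.C (f n))).Monic :=
    Polynomial.monic_prod_of_monic _ _ (fun i _ => Polynomial.monic_X_sub_C (f i))
  refine Polynomial.eq_of_monic_of_dvd_of_natDegree_le hm' hm ?_ ?_
  · apply Finset.prod_dvd_of_coprime
    · intro i _ j _ hij
      exact Polynomial.isCoprime_X_sub_C_of_isUnit_sub
        (sub_ne_zero.mpr (fun h => hij (hf h))).isUnit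
    · intro i _
      rw [Polynomial.dvd_iff_isRoot]
      exact (isEig_iff_root M _).1 (h i)
  · rw [M.charpoly_natDegree_eq_dim, Polynomial.natDegree_prod_of_monic _ _
      (fun i _ => Polynomial.monic_X_sub_C (f i))]
    simp

lemma isEig_iff_of_inj (M : Matrix N N ℂ) (f : N → ℂ) (hf : Function.Injective f)
    (h : ∀ n, IsEig M (f n)) (x : ℂ) : IsEig M x ↔ ∃ n, x = f n := by
  rw [isEig_iff_root, charpoly_eq_of_inj M f hf h, Polynomial.eval_prod, Finset.prod_eq_zero_iff]
  simp [sub_eq_zero]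

/-- Two matrices, one with simple spectrum, whose eigenvalues agree. -/
lemma det_eq_of_eig (M M' : Matrix N N ℂ) (f : N → ℂ) (hf : Function.Injective f)
    (h : ∀ n, IsEig M (f n)) (h' : ∀ n, IsEig M' (f n)) (x : ℂ) :
    (M - x • (1 : Matrix N N ℂ)).det = (M' - x • (1 : Matrix N N ℂ)).det := by
  rw [det_sub_eq_charpoly, det_sub_eq_charpoly, charpoly_eq_of_inj M f hf h,
    charpoly_eq_of_inj M' f hf h']

lemma exists_near_root (α : N → ℂ) {δ : ℝ} (hδ : 0 < δ) :
    ∃ ε > 0, ∀ E : Matrix N N ℂ, (∀ i j, ‖E i j‖ < ε) →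
      ∀ n, ∃ x, IsEig (Matrix.diagonal α + E) x ∧ ‖x - α n‖ < δ := by
  classical
  have key : ∀ n, ∀ᶠ E in nhds (0 : N → N → ℂ),
      ‖(Matrix.diagonal α + Matrix.of E - α n • (1 : Matrix N N ℂ)).det‖ < δ ^ Fintype.card N := by
    intro n
    have hc : Continuous (fun E : N → N → ℂ =>
        ‖(Matrix.diagonal α + Matrix.of E - α n • (1 : Matrix N N ℂ)).det‖) := by
      apply Continuous.norm
      apply Continuous.matrix_det
      refine Continuous.sub (Continuous.add continuous_const ?_) continuous_const
      exact continuous_id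
    have h0 : (Matrix.diagonal α + Matrix.of (0 : N → N → ℂ) - α n • (1 : Matrix N N ℂ)).det
        = 0 := by
      have : Matrix.diagonal α + Matrix.of (0 : N → N → ℂ) - α n • (1 : Matrix N N ℂ)
          = Matrix.diagonal (fun i => α i - α n) := by
        rw [Matrix.smul_one_eq_diagonal]
        ext i j
        by_cases hij : i = j
        · subst hij; simp
        · simp [hij]
      rw [this, Matrix.det_diagonal]
      exact Finset.prod_eq_zero (Finset.mem_univ n) (by simp)
    have := hc.tendsto 0
    rw [h0, norm_zero] at this
    exact this.eventually_lt_const (by positivity)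
  have key2 := Filter.eventually_all.2 key
  rw [Metric.eventually_nhds_iff] at key2
  obtain ⟨ε, hε, H⟩ := key2
  refine ⟨ε, hε, fun E hE n => ?_⟩
  have hd : dist (fun i j => E i j) (0 : N → N → ℂ) < ε := by
    rw [dist_pi_lt_iff hε]
    intro i
    rw [dist_pi_lt_iff hε]
    intro j
    simpa using hE i j
  have h1 := H hd n
  by_contra hcon
  push Not at hcon
  have h2 : (Matrix.diagonal α + Matrix.of (fun i j => E i j)) = Matrix.diagonal α + E := rfl
  rw [h2, det_sub_eq_charpoly] at h1
  set p := (Matrix.diagonal α + E).charpoly with hp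
  have hroots := (IsAlgClosed.splits p).eq_prod_roots_of_monic (Matrix.charpoly_monic _)
  have hcard : p.roots.card = Fintype.card N := by
    rw [← Matrix.charpoly_natDegree_eq_dim (Matrix.diagonal α + E), ← hp]
    exact (IsAlgClosed.splits p).natDegree_eq_card_roots.symm
  have h3 : δ ^ Fintype.card N ≤ ‖p.eval (α n)‖ := by
    conv_rhs => rw [hroots]
    rw [Polynomial.eval_multiset_prod, Multiset.map_map]
    have : ∀ s : Multiset ℂ, (∀ x ∈ s, x ∈ p.roots) → δ ^ s.card ≤
        ‖(Multiset.map (Polynomial.eval (α n) ∘ fun x => Polynomial.X - Polynomial.C x) s).prod‖ := by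
      intro s
      induction s using Multiset.induction_on with
      | empty => simp
      | cons a s ih =>
        intro hs
        simp only [Multiset.card_cons, Multiset.map_cons, Multiset.prod_cons, norm_mul, pow_succ']
        have ha : a ∈ p.roots := hs a (Multiset.mem_cons_self a s)
        have hx := hcon a ((isEig_iff_root _ _).2 (Polynomial.isRoot_of_mem_roots ha))
        apply mul_le_mul
        · simpa [norm_sub_rev] using hx
        · exact ih (fun x hx => hs x (Multiset.mem_cons_of_mem hx))
        · positivity
        · positivity
    rw [← hcard]
    exact this _ (fun x hx => hx)
  rw [norm_mul] at h1
  simp at h1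
  linarith

/-- Spectrum of a small perturbation of a large diagonal matrix with distinct entries. -/
lemma spectrum_large (α : N → ℂ) (hα : Function.Injective α) {δ : ℝ} (hδ : 0 < δ) (K : ℝ) :
    ∃ S > 0, ∀ s : ℂ, S ≤ ‖s‖ → ∀ E : Matrix N N ℂ, (∀ i j, ‖E i j‖ ≤ K) →
      ∃ f : N → ℂ, Function.Injective f ∧
        (∀ x, IsEig (Matrix.diagonal (fun n => s * α n) + E) x ↔ ∃ n, x = f n) ∧
        ∀ n, ‖f n - s * α n‖ ≤ δ * ‖s‖ := by
  classical
  -- separation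
  obtain ⟨g, hg, hsep⟩ : ∃ g > 0, ∀ n m, n ≠ m → 2 * g ≤ ‖α n - α m‖ := by
    by_cases hne : (Finset.univ.filter (fun p : N × N => p.1 ≠ p.2)).Nonempty
    · obtain ⟨p, hp, hmin⟩ := Finset.exists_min_image _ (fun p : N × N => ‖α p.1 - α p.2‖) hne
      simp only [Finset.mem_filter, Finset.mem_univ, true_and] at hp
      have hpos : 0 < ‖α p.1 - α p.2‖ := norm_pos_iff.2 (sub_ne_zero.2 (fun h => hp (hα h)))
      refine ⟨‖α p.1 - α p.2‖ / 2, by positivity, fun n m hnm => ?_⟩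
      have := hmin (n, m) (by simpa using hnm)
      simp only at this
      linarith
    · refine ⟨1, one_pos, fun n m hnm => ?_⟩
      exact absurd ⟨(n, m), by simpa using hnm⟩ hne
  obtain ⟨ε, hε, H⟩ := exists_near_root α (lt_min hδ hg)
  refine ⟨(|K| + 1) / ε, by positivity, fun s hs E hE => ?_⟩
  have hspos : 0 < ‖s‖ := lt_of_lt_of_le (by positivity) hs
  have hs0 : s ≠ 0 := norm_pos_iff.1 hspos
  have hsmall : ∀ i j, ‖(s⁻¹ • E) i j‖ < ε := by
    intro i j
    rw [Matrix.smul_apply, smul_eq_mul, norm_mul, norm_inv, inv_mul_lt_iff₀ hspos]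
    rw [div_le_iff₀ hε] at hs
    have := hE i j
    have := le_abs_self K
    linarith
  choose f hf hfn using H _ hsmall
  have hmat : Matrix.diagonal (fun n => s * α n) + E = s • (Matrix.diagonal α + s⁻¹ • E) := by
    rw [smul_add, smul_smul, mul_inv_cancel₀ hs0, one_smul]
    congr 1
    ext i j
    by_cases hij : i = j
    · subst hij; simp
    · simp [hij]
  have hinj : Function.Injective (fun n => s * f n) := by
    intro n m hnm
    have hnm' : f n = f m := mul_left_cancel₀ hs0 hnm
    by_contra hne
    have h1 := hsep n m hne
    have h2 := lt_of_lt_of_le (hfn n) (min_le_right _ _)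
    have h3 := lt_of_lt_of_le (hfn m) (min_le_right _ _)
    have h4 : ‖α n - α m‖ ≤ ‖f n - α n‖ + ‖f m - α m‖ := by
      have : α n - α m = (f m - α m) - (f n - α n) := by rw [hnm']; ring
      rw [this]
      have := norm_sub_le (f m - α m) (f n - α n)
      linarith
    linarith
  have heig : ∀ n, IsEig (Matrix.diagonal (fun n => s * α n) + E) (s * f n) := by
    intro n
    rw [hmat, IsEig, mul_smul, ← smul_sub, Matrix.det_smul]
    have := hf n
    rw [IsEig] at this
    rw [this, mul_zero]
  refine ⟨fun n => s * f n, hinj, fun x => isEig_iff_of_inj _ _ hinj heig x, fun n => ?_⟩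
  rw [← mul_sub, norm_mul, mul_comm]
  have h2 := lt_of_lt_of_le (hfn n) (min_le_left _ _)
  gcongr

lemma eig_norm_le (M : Matrix N N ℂ) (K : ℝ) (hK : ∀ i j, ‖M i j‖ ≤ K) (x : ℂ) (hx : IsEig M x) :
    ‖x‖ ≤ Fintype.card N * K := by
  by_contra hcon
  push Not at hcon
  apply det_ne_zero_of_sum_row_lt_diag (A := M - x • (1 : Matrix N N ℂ)) _ hx
  intro k
  have h1 : ∑ j ∈ Finset.univ.erase k, ‖(M - x • (1 : Matrix N N ℂ)) k j‖
      ≤ ∑ j ∈ Finset.univ.erase k, K := by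
    apply Finset.sum_le_sum
    intro j hj
    have : k ≠ j := (Finset.ne_of_mem_erase hj).symm
    simpa [Matrix.one_apply, this] using hK k j
  have h2 : ∑ j ∈ Finset.univ.erase k, K + K = Fintype.card N * K := by
    rw [Finset.sum_erase_add _ _ (Finset.mem_univ k)]
    simp
  have h3 : ‖x‖ - ‖M k k‖ ≤ ‖(M - x • (1 : Matrix N N ℂ)) k k‖ := by
    simp only [Matrix.sub_apply, Matrix.smul_apply, Matrix.one_apply_eq, smul_eq_mul, mul_one]
    rw [norm_sub_rev]
    exact norm_sub_norm_le _ _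
  have := hK k k
  linarith

lemma isEig_add_smul (M : Matrix N N ℂ) (c x : ℂ) :
    IsEig (M + c • (1 : Matrix N N ℂ)) x ↔ IsEig M (x - c) := by
  rw [IsEig, IsEig]
  congr! 2
  rw [sub_smul]; abel

/-- Eigenvalues of Kronecker sums. -/
lemma isEig_kron {N' : Type*} [Fintype N'] [DecidableEq N'] (A : Matrix N N ℂ)
    (B : Matrix N' N' ℂ) (M : Matrix (N × N') (N × N') ℂ)
    (hM : ∀ i j i' j', M (i, j) (i', j') =
      (if j = j' then A i i' else 0) + (if i = i' then B j j' else 0)) (x : ℂ) :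
    IsEig M x ↔ ∃ a, IsEig A a ∧ IsEig B (x - a) := by
  have hmv : ∀ (v : N × N' → ℂ) i j, M.mulVec v (i, j) =
      ∑ i', A i i' * v (i', j) + ∑ j', B j j' * v (i, j') := by
    intro v i j
    simp only [Matrix.mulVec, dotProduct, Fintype.sum_prod_type, hM, add_mul, ite_mul, zero_mul,
      Finset.sum_add_distrib]
    congr 1
    · simp
    · rw [Finset.sum_comm]; simp
  constructor
  · intro h
    obtain ⟨v, hv, hvx⟩ := (isEig_iff_vec _ _).1 h
    by_contra hcon
    push Not at hcon
    apply hv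
    -- Sylvester equation
    let W : Matrix N N' ℂ := Matrix.of fun i j => v (i, j)
    let B' : Matrix N' N' ℂ := x • 1 - B.transpose
    have hS : A * W = W * B' := by
      ext i j
      have := congrFun hvx (i, j)
      rw [hmv] at this
      simp only [Pi.smul_apply, smul_eq_mul] at this
      have h1 : (A * W) i j = ∑ i', A i i' * v (i', j) := by simp [Matrix.mul_apply, W]
      have h2 : (W * B') i j = x * v (i, j) - ∑ j', B j j' * v (i, j') := by
        have h3 : W * B' = x • W - W * B.transpose := by
          simp only [B', Matrix.mul_sub, Matrix.mul_smul, Matrix.mul_one]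
        rw [h3]
        simp [Matrix.mul_apply, W, mul_comm]
      rw [h1, h2, ← this]; ring
    have hpoly : ∀ p : Polynomial ℂ, Polynomial.aeval A p * W = W * Polynomial.aeval B' p := by
      intro p
      induction p using Polynomial.induction_on' with
      | add p q hp hq => simp only [map_add, Matrix.add_mul, Matrix.mul_add, hp, hq]
      | monomial n a =>
        simp only [Polynomial.aeval_monomial, Algebra.algebraMap_eq_smul_one, Matrix.smul_mul,
          Matrix.mul_smul, Matrix.one_mul]
        congr 1
        induction n with
        | zero => simp
        | succ n ih => rw [pow_succ, Matrix.mul_assoc, hS, ← Matrix.mul_assoc, ih, Matrix.mul_assoc,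
            ← pow_succ]
    have h0 := hpoly A.charpoly
    rw [Matrix.aeval_self_charpoly, Matrix.zero_mul] at h0
    have hunit : IsUnit (Polynomial.aeval B' A.charpoly) := by
      have hroots := (IsAlgClosed.splits A.charpoly).eq_prod_roots_of_monic (Matrix.charpoly_monic _)
      rw [hroots]
      have : ∀ s : Multiset ℂ, (∀ a ∈ s, a ∈ A.charpoly.roots) → IsUnit (Polynomial.aeval B'
          (Multiset.map (fun x => Polynomial.X - Polynomial.C x) s).prod) := by
        intro s
        induction s using Multiset.induction_on with
        | empty => simp
        | cons a s ih =>
          intro hs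
          rw [Multiset.map_cons, Multiset.prod_cons, map_mul]
          apply IsUnit.mul
          · have ha : a ∈ A.charpoly.roots := hs a (Multiset.mem_cons_self a s)
            have hb := hcon a ((isEig_iff_root _ _).2 (Polynomial.isRoot_of_mem_roots ha))
            rw [Matrix.isUnit_iff_isUnit_det, isUnit_iff_ne_zero]
            intro hdet
            apply hb
            rw [IsEig, ← neg_sub, Matrix.det_neg, ← Matrix.det_transpose]
            have : (((x - a) • (1 : Matrix N' N' ℂ) - B).transpose) =
                Polynomial.aeval B' (Polynomial.X - Polynomial.C a) := by
              simp only [B', map_sub, Polynomial.aeval_X, Polynomial.aeval_C,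
                Algebra.algebraMap_eq_smul_one, Matrix.transpose_sub, Matrix.transpose_smul,
                Matrix.transpose_one, sub_smul]
              abel
            rw [this, hdet, mul_zero]
          · exact ih (fun x hx => hs x (Multiset.mem_cons_of_mem hx))
      exact this _ (fun a ha => ha)
    have hW : W = 0 := by
      obtain ⟨u, hu⟩ := hunit
      have : W * (u : Matrix N' N' ℂ) * ((u⁻¹ : (Matrix N' N' ℂ)ˣ) : Matrix N' N' ℂ) = 0 := by
        rw [hu, ← h0, Matrix.zero_mul]
      rwa [Matrix.mul_assoc, Units.mul_inv, Matrix.mul_one] at this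
    ext ⟨i, j⟩
    exact congrFun (congrFun hW i) j
  · rintro ⟨a, ha, hb⟩
    obtain ⟨u, hu, hua⟩ := (isEig_iff_vec _ _).1 ha
    obtain ⟨w, hw, hwb⟩ := (isEig_iff_vec _ _).1 hb
    rw [isEig_iff_vec]
    refine ⟨fun p => u p.1 * w p.2, ?_, ?_⟩
    · intro h0
      obtain ⟨i, hi⟩ := Function.ne_iff.1 hu
      obtain ⟨j, hj⟩ := Function.ne_iff.1 hw
      have := congrFun h0 (i, j)
      simp at this hi hj
      tauto
    · ext ⟨i, j⟩
      rw [hmv]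
      have h1 := congrFun hua i
      have h2 := congrFun hwb j
      simp only [Matrix.mulVec, dotProduct, Pi.smul_apply, smul_eq_mul] at h1 h2 ⊢
      have e1 : ∑ i', A i i' * (u i' * w j) = (∑ i', A i i' * u i') * w j := by
        rw [Finset.sum_mul]; exact Finset.sum_congr rfl (fun _ _ => by ring)
      have e2 : ∑ j', B j j' * (u i * w j') = u i * (∑ j', B j j' * w j') := by
        rw [Finset.mul_sum]; exact Finset.sum_congr rfl (fun _ _ => by ring)
      rw [e1, e2, h1, h2]; ring

end MatrixPart

section RootPart

/-- The root of unity `e^{2πi m/N}`. -/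
def rt (N : ℕ) (m : ℤ) : ℂ := Complex.exp (2 * Real.pi * Complex.I * (m : ℂ) / (N : ℂ))

lemma rt_eq_pow (N : ℕ) (m : ℕ) :
    rt N m = Complex.exp (2 * Real.pi * Complex.I / (N : ℂ)) ^ m := by
  rw [rt, ← Complex.exp_nat_mul]
  congr 1
  push_cast
  ring

lemma rt_ne_zero (N : ℕ) (m : ℤ) : rt N m ≠ 0 := Complex.exp_ne_zero _

lemma rt_pow (N : ℕ) (hN : 0 < N) (m : ℕ) : rt N m ^ N = 1 := by
  rw [rt_eq_pow, pow_right_comm,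
    (Complex.isPrimitiveRoot_exp N hN.ne').pow_eq_one, one_pow]

lemma norm_rt (N : ℕ) (m : ℕ) : ‖rt N m‖ = 1 := by
  have h : (2 * Real.pi * Complex.I * ((m : ℤ) : ℂ) / (N : ℂ)) =
      ((2 * Real.pi * m / N : ℝ) : ℂ) * Complex.I := by
    push_cast; ring
  rw [rt, h, Complex.norm_exp_ofReal_mul_I]

lemma rt_zero (N : ℕ) : rt N 0 = 1 := by simp [rt]

lemma rt_inj {N : ℕ} {m m' : ℕ} (hm : m < N) (hm' : m' < N) (h : rt N m = rt N m') : m = m' := by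
  rw [rt_eq_pow, rt_eq_pow] at h
  exact (Complex.isPrimitiveRoot_exp N (by omega)).pow_inj hm hm' h

lemma eq_one_of_coprime {a b : ℕ} (hab : Nat.Coprime a b) {w : ℂ} (ha : w ^ a = 1)
    (hb : w ^ b = 1) : w = 1 := by
  have h1 := orderOf_dvd_of_pow_eq_one ha
  have h2 := orderOf_dvd_of_pow_eq_one hb
  have := Nat.eq_one_of_dvd_coprimes hab h1 h2
  exact orderOf_eq_one_iff.1 this

end RootPart

section CellPart

variable {ι : Type*} [Fintype ι] [DecidableEq ι]

/-- The fundamental cell over a general finite index type. -/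
abbrev GC (q : ι → ℕ) := (j : ι) → Fin (q j)

/-- The diagonal of the free Floquet matrix. -/
def Ad (q : ι → ℕ) (z : ι → ℂ) (n : GC q) : ℂ :=
  ∑ j, (rt (q j) (n j : ℕ) * z j + (rt (q j) (n j : ℕ) * z j)⁻¹)

/-- Diagonal plus constant matrix. -/
def FM (q : ι → ℕ) (B : Matrix (GC q) (GC q) ℂ) (z : ι → ℂ) : Matrix (GC q) (GC q) ℂ :=
  Matrix.diagonal (Ad q z) + B

/-- Leading coefficient of the diagonal. -/
def al (q : ι → ℕ) (x : ι → ℂ) (n : GC q) : ℂ := ∑ j, rt (q j) (n j : ℕ) * x j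

/-- A generic direction. -/
lemma exists_generic [Nonempty ι] (q : ι → ℕ) (hq : ∀ j, 0 < q j) (R : ℕ) (hR : 0 < R)
    (hco : ∀ j, Nat.Coprime (q j) R) :
    ∃ x : ι → ℂ, (∀ j, x j ≠ 0) ∧ (∀ n : GC q, al q x n ≠ 0) ∧
      (∀ n m : GC q, ∀ k l : Fin R, al q x n * rt R (l : ℕ) = al q x m * rt R (k : ℕ) →
        n = m ∧ k = l) := by
  classical
  let J := ι ⊕ GC q ⊕ {p : (GC q × GC q) × (Fin R × Fin R) // ¬ (p.1.1 = p.1.2 ∧ p.2.1 = p.2.2)}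
  let lin : (ι → ℂ) → Module.Dual ℂ (ι → ℂ) := fun c => ∑ j, c j • LinearMap.proj j
  have hlin : ∀ c x, lin c x = ∑ j, c j * x j := by
    intro c x; simp [lin, LinearMap.sum_apply]
  have hsingle : ∀ c j, lin c (Pi.single j 1) = c j := by
    intro c j; rw [hlin]; simp [Pi.single_apply]
  let cf : J → ι → ℂ := fun a => match a with
    | Sum.inl i => Pi.single i 1
    | Sum.inr (Sum.inl n) => fun j => rt (q j) (n j : ℕ)
    | Sum.inr (Sum.inr p) => fun j => rt (q j) (p.1.1.1 j : ℕ) * rt R (p.1.2.2 : ℕ) -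
        rt (q j) (p.1.1.2 j : ℕ) * rt R (p.1.2.1 : ℕ)
  have hne : ∀ a : J, ∃ x, lin (cf a) x ≠ 0 := by
    intro a
    suffices ∃ j, cf a j ≠ 0 by
      obtain ⟨j, hj⟩ := this
      exact ⟨Pi.single j 1, by rwa [hsingle]⟩
    obtain ⟨j0⟩ := ‹Nonempty ι›
    rcases a with i | n | ⟨⟨⟨n, m⟩, ⟨k, l⟩⟩, hp⟩
    · exact ⟨i, by simp [cf]⟩
    · exact ⟨j0, rt_ne_zero _ _⟩
    · by_contra hcon
      push Not at hcon
      apply hp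
      have key : ∀ j, rt R (k : ℕ) = rt R (l : ℕ) ∧ n j = m j := by
        intro j
        have h1 := hcon j
        simp only [cf, sub_eq_zero] at h1
        have hw : rt (q j) (n j : ℕ) / rt (q j) (m j : ℕ) = rt R (k : ℕ) / rt R (l : ℕ) := by
          rw [div_eq_div_iff (rt_ne_zero _ _) (rt_ne_zero _ _), h1, mul_comm]
        have h2 : rt R (k : ℕ) / rt R (l : ℕ) = 1 := by
          apply eq_one_of_coprime (hco j)
          · rw [← hw, div_pow, rt_pow _ (hq j), rt_pow _ (hq j), div_one]
          · rw [div_pow, rt_pow _ hR, rt_pow _ hR, div_one]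
        rw [h2] at hw
        refine ⟨(div_eq_one_iff_eq (rt_ne_zero _ _)).1 h2, ?_⟩
        exact Fin.ext (rt_inj (n j).2 (m j).2 ((div_eq_one_iff_eq (rt_ne_zero _ _)).1 hw))
      exact ⟨funext fun j => (key j).2, Fin.ext (rt_inj k.2 l.2 (key j0).1)⟩
  obtain ⟨x, hx⟩ := Module.Dual.exists_forall_ne_zero_of_forall_exists (fun a => lin (cf a)) hne
  refine ⟨x, fun j => ?_, fun n => ?_, fun n m k l h => ?_⟩
  · have := hx (Sum.inl j)
    rw [hlin] at this
    simpa [cf, Pi.single_apply] using this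
  · have := hx (Sum.inr (Sum.inl n))
    rw [hlin] at this
    exact this
  · by_contra hcon
    have := hx (Sum.inr (Sum.inr ⟨((n, m), (k, l)), hcon⟩))
    rw [hlin] at this
    apply this
    simp only [cf, sub_mul, Finset.sum_sub_distrib, sub_eq_zero]
    rw [al, al, Finset.sum_mul, Finset.sum_mul] at h
    convert h using 2 <;> ring

/-- A direction along which only the zero entry stays bounded. -/
lemma exists_special [Nontrivial ι] (q : ι → ℕ) (hq : ∀ j, 0 < q j)
    (hco : ∀ i j, i ≠ j → Nat.Coprime (q i) (q j)) (n0 : GC q) (hn0 : ∀ j, (n0 j : ℕ) = 0) :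
    ∃ x : ι → ℂ, (∀ j, x j ≠ 0) ∧ al q x n0 = 0 ∧ ∀ n, n ≠ n0 → al q x n ≠ 0 := by
  classical
  let lin : (ι → ℂ) → Module.Dual ℂ (ι → ℂ) := fun c => ∑ j, c j • LinearMap.proj j
  have hlin : ∀ c x, lin c x = ∑ j, c j * x j := by
    intro c x; simp [lin, LinearMap.sum_apply]
  have hsingle : ∀ c j, lin c (Pi.single j 1) = c j := by
    intro c j; rw [hlin]; simp [Pi.single_apply]
  let J := ι ⊕ {n : GC q // n ≠ n0}
  let cf : J → ι → ℂ := fun a => match a with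
    | Sum.inl i => Pi.single i 1
    | Sum.inr n => fun j => rt (q j) (n.1 j : ℕ)
  have hne : ∀ a : J, ∃ x ∈ LinearMap.ker (lin (fun _ => 1)), lin (cf a) x ≠ 0 := by
    intro a
    suffices ∃ j k, cf a j ≠ cf a k by
      obtain ⟨j, k, hj⟩ := this
      refine ⟨Pi.single j 1 - Pi.single k 1, ?_, ?_⟩
      · rw [LinearMap.mem_ker, map_sub, hsingle, hsingle, sub_self]
      · rw [map_sub, hsingle, hsingle]
        exact sub_ne_zero.2 hj
    rcases a with i | ⟨n, hn⟩
    · obtain ⟨k, hk⟩ := exists_ne i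
      exact ⟨i, k, by simp [cf, hk]⟩
    · obtain ⟨j, hj⟩ := Function.ne_iff.1 hn
      obtain ⟨k, hk⟩ := exists_ne j
      refine ⟨j, k, fun h => hj ?_⟩
      simp only [cf] at h
      have h1 : rt (q j) (n j : ℕ) = 1 := by
        apply eq_one_of_coprime (hco j k hk.symm)
        · exact rt_pow _ (hq j) _
        · rw [h]; exact rt_pow _ (hq k) _
      apply Fin.ext
      apply rt_inj (n j).2 (n0 j).2
      rw [h1, hn0 j]
      exact (rt_zero _).symm
  obtain ⟨x, hx0, hx⟩ := Module.Dual.exists_forall_mem_ne_zero_of_forall_exists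
    (LinearMap.ker (lin (fun _ => 1))) (fun a => lin (cf a)) hne
  refine ⟨x, fun j => ?_, ?_, fun n hn => ?_⟩
  · have := hx (Sum.inl j)
    rw [hlin] at this
    simpa [cf, Pi.single_apply] using this
  · rw [LinearMap.mem_ker, hlin] at hx0
    rw [al, ← hx0]
    refine Finset.sum_congr rfl fun j _ => ?_
    rw [hn0 j]
    congr 1
    exact rt_zero _
  · have := hx (Sum.inr ⟨n, hn⟩)
    rw [hlin] at this
    exact this

/-- Asymptotics of `FM` in a direction. -/
lemma FM_large (q : ι → ℕ) (B : Matrix (GC q) (GC q) ℂ) (x y : ι → ℂ) (hx : ∀ j, x j ≠ 0) :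
    ∃ T K : ℝ, ∀ τ : ℂ, T ≤ ‖τ‖ → (∀ j, y j + τ * x j ≠ 0) ∧
      ∃ E : Matrix (GC q) (GC q) ℂ, (∀ i j, ‖E i j‖ ≤ K) ∧
        FM q B (fun j => y j + τ * x j) = Matrix.diagonal (fun n => τ * al q x n) + E := by
  classical
  refine ⟨∑ j, (1 + ‖y j‖) / ‖x j‖, (∑ j, (‖y j‖ + 1)) + ∑ i, ∑ j, ‖B i j‖, fun τ hτ => ?_⟩
  have hlow : ∀ j, 1 ≤ ‖y j + τ * x j‖ := by
    intro j
    have hxj : 0 < ‖x j‖ := norm_pos_iff.2 (hx j)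
    have h1 : (1 + ‖y j‖) / ‖x j‖ ≤ ‖τ‖ :=
      le_trans (Finset.single_le_sum (f := fun j => (1 + ‖y j‖) / ‖x j‖)
        (fun i _ => by positivity) (Finset.mem_univ j)) hτ
    rw [div_le_iff₀ hxj, ← norm_mul] at h1
    have h2 := norm_sub_norm_le (τ * x j) (-(y j))
    rw [norm_neg, sub_neg_eq_add, add_comm] at h2
    have h3 : ‖τ * x j‖ - ‖y j‖ ≤ ‖y j + τ * x j‖ := by linarith
    linarith
  refine ⟨fun j h => ?_, ?_⟩
  · have := hlow j
    rw [h, norm_zero] at this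
    linarith
  refine ⟨Matrix.diagonal (fun n => ∑ j, (rt (q j) (n j : ℕ) * y j +
    (rt (q j) (n j : ℕ) * (y j + τ * x j))⁻¹)) + B, fun i j => ?_, ?_⟩
  · rw [Matrix.add_apply]
    refine (norm_add_le _ _).trans (add_le_add ?_ ?_)
    · rw [Matrix.diagonal_apply]
      split_ifs
      · refine (norm_sum_le _ _).trans (Finset.sum_le_sum fun k _ => ?_)
        refine (norm_add_le _ _).trans (add_le_add ?_ ?_)
        · rw [norm_mul, norm_rt, one_mul]
        · rw [norm_inv, norm_mul, norm_rt, one_mul]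
          exact inv_le_one_of_one_le₀ (hlow k)
      · rw [norm_zero]
        exact Finset.sum_nonneg fun k _ => by positivity
    · refine le_trans ?_ (Finset.single_le_sum (f := fun i => ∑ j, ‖B i j‖)
        (fun i _ => Finset.sum_nonneg fun j _ => norm_nonneg _) (Finset.mem_univ i))
      exact Finset.single_le_sum (f := fun j => ‖B i j‖)
        (fun j _ => norm_nonneg _) (Finset.mem_univ j)
  · rw [FM, ← add_assoc, Matrix.diagonal_add]
    congr 2
    ext n
    rw [Ad, al, Finset.mul_sum, ← Finset.sum_add_distrib]
    refine Finset.sum_congr rfl fun j _ => ?_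
    ring

/-- Simple spectrum for large parameters in a generic direction. -/
lemma FM_spectrum (q : ι → ℕ) (B : Matrix (GC q) (GC q) ℂ) (x y : ι → ℂ) (hx : ∀ j, x j ≠ 0)
    (hinj : Function.Injective (al q x)) {δ : ℝ} (hδ : 0 < δ) :
    ∃ T : ℝ, ∀ τ : ℂ, T ≤ ‖τ‖ → (∀ j, y j + τ * x j ≠ 0) ∧
      ∃ f : GC q → ℂ, Function.Injective f ∧
        (∀ a, IsEig (FM q B (fun j => y j + τ * x j)) a ↔ ∃ n, a = f n) ∧
        ∀ n, ‖f n - τ * al q x n‖ ≤ δ * ‖τ‖ := by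
  obtain ⟨T, K, H⟩ := FM_large q B x y hx
  obtain ⟨S, hS, H2⟩ := spectrum_large (al q x) hinj hδ K
  refine ⟨max T S, fun τ hτ => ?_⟩
  obtain ⟨h1, E, hE, hF⟩ := H τ (le_trans (le_max_left _ _) hτ)
  refine ⟨h1, ?_⟩
  rw [hF]
  exact H2 τ (le_trans (le_max_right _ _) hτ) E hE

/-- Polynomial in `τ` representing the determinant along a line. -/
lemma exists_poly (q : ι → ℕ) (B : Matrix (GC q) (GC q) ℂ) (x y : ι → ℂ) (lam : ℂ) :
    ∃ p : Polynomial ℂ, ∀ τ : ℂ, (∀ j, y j + τ * x j ≠ 0) →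
      p.eval τ = (∏ _n : GC q, ∏ j, (y j + τ * x j)) *
        (FM q B (fun j => y j + τ * x j) - lam • (1 : Matrix (GC q) (GC q) ℂ)).det := by
  classical
  let ℓ : ι → Polynomial ℂ := fun j => Polynomial.C (y j) + Polynomial.X * Polynomial.C (x j)
  have hℓ : ∀ j τ, (ℓ j).eval τ = y j + τ * x j := by intro j τ; simp [ℓ]; ring
  let Pm : Matrix (GC q) (GC q) (Polynomial ℂ) := Matrix.of fun n n' =>
    (if n = n' then ∑ j, (Polynomial.C (rt (q j) (n j : ℕ)) * ℓ j * ∏ i, ℓ i +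
      Polynomial.C (rt (q j) (n j : ℕ))⁻¹ * ∏ i ∈ Finset.univ.erase j, ℓ i) else 0) +
      Polynomial.C ((B - lam • (1 : Matrix (GC q) (GC q) ℂ)) n n') * ∏ i, ℓ i
  refine ⟨Pm.det, fun τ hτ => ?_⟩
  rw [← Matrix.det_mul_column, ← Polynomial.coe_evalRingHom, RingHom.map_det]
  congr 1
  ext n n'
  simp only [Pm, RingHom.mapMatrix_apply, Matrix.map_apply, Matrix.of_apply,
    Polynomial.coe_evalRingHom, Polynomial.eval_add, Polynomial.eval_mul, Polynomial.eval_C,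
    Polynomial.eval_prod, hℓ]
  rw [FM, add_sub_assoc, Matrix.add_apply, mul_add, mul_comm (∏ j, (y j + τ * x j)) ((B - _) n n')]
  congr 1
  by_cases h : n = n'
  · subst h
    rw [if_pos rfl, Matrix.diagonal_apply_eq, Ad, Finset.mul_sum, Polynomial.eval_finsetSum]
    refine Finset.sum_congr rfl fun j _ => ?_
    simp only [Polynomial.eval_add, Polynomial.eval_mul, Polynomial.eval_C,
      Polynomial.eval_prod, hℓ]
    rw [← Finset.mul_prod_erase Finset.univ (fun i => y i + τ * x i) (Finset.mem_univ j)]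
    have := hτ j
    have := rt_ne_zero (q j) (n j : ℕ)
    field_simp
  · simp [h]

lemma det_eq_of_large (q : ι → ℕ) (B B' : Matrix (GC q) (GC q) ℂ) (x y : ι → ℂ)
    (hy : ∀ j, y j ≠ 0) (lam : ℂ) (T : ℝ)
    (h : ∀ τ : ℂ, T ≤ ‖τ‖ → (∀ j, y j + τ * x j ≠ 0) ∧
      (FM q B (fun j => y j + τ * x j) - lam • (1 : Matrix (GC q) (GC q) ℂ)).det =
      (FM q B' (fun j => y j + τ * x j) - lam • (1 : Matrix (GC q) (GC q) ℂ)).det) :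
    (FM q B y - lam • (1 : Matrix (GC q) (GC q) ℂ)).det =
      (FM q B' y - lam • (1 : Matrix (GC q) (GC q) ℂ)).det := by
  obtain ⟨p, hp⟩ := exists_poly q B x y lam
  obtain ⟨p', hp'⟩ := exists_poly q B' x y lam
  have hpp : p = p' := by
    apply Polynomial.eq_of_infinite_eval_eq
    have hinf : (Set.range (fun k : ℕ => ((⌈|T|⌉₊ + k : ℕ) : ℂ))).Infinite := by
      apply Set.infinite_range_of_injective
      intro a b hab
      have : ⌈|T|⌉₊ + a = ⌈|T|⌉₊ + b := by
        simp only [Nat.cast_inj] at hab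
        exact hab
      omega
    refine hinf.mono ?_
    rintro _ ⟨k, rfl⟩
    have hT : T ≤ ‖((⌈|T|⌉₊ + k : ℕ) : ℂ)‖ := by
      rw [Complex.norm_natCast]
      have h1 := Nat.le_ceil |T|
      have h2 := le_abs_self T
      push_cast
      have : (0 : ℝ) ≤ k := Nat.cast_nonneg k
      linarith
    obtain ⟨h1, h2⟩ := h _ hT
    rw [Set.mem_ofPred_eq, hp _ h1, hp' _ h1, h2]
  have h0 : ∀ j, y j + 0 * x j ≠ 0 := by simpa using hy
  have e1 := hp 0 h0
  have e2 := hp' 0 h0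
  rw [hpp, e2] at e1
  have hprod : (∏ _n : GC q, ∏ j, (y j + 0 * x j)) ≠ 0 :=
    Finset.prod_ne_zero_iff.2 fun _ _ => Finset.prod_ne_zero_iff.2 fun j _ => h0 j
  have := mul_left_cancel₀ hprod e1
  simpa using this.symm

end CellPart

section CaseOne

lemma eventually_zero (g : ℂ → ℂ → ℂ) (t0 : ℂ) (r : ℝ) (hr : 0 < r) (P : ℂ) (hP : P ≠ 0)
    (hc : ∀ t, ContinuousAt (fun p : ℂ × ℂ => g p.1 p.2) (0, t))
    (h0 : ∀ t, g 0 t = P * (t - t0))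
    (hd : ∀ᶠ u in nhds (0 : ℂ), ∀ t ∈ Metric.closedBall t0 r, DifferentiableAt ℂ (g u) t) :
    ∀ᶠ u in nhds (0 : ℂ), ∃ t ∈ Metric.closedBall t0 r, g u t = 0 := by
  have hPr : 0 < ‖P‖ * r := mul_pos (norm_pos_iff.2 hP) hr
  have h1 : ∀ᶠ u in nhds (0 : ℂ), ∀ t ∈ Metric.sphere t0 r, ‖P‖ * r / 2 < ‖g u t‖ := by
    apply (isCompact_sphere t0 r).eventually_forall_of_forall_eventually
    intro t ht
    have := (hc t).norm
    refine this.eventually_const_lt ?_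
    simp only
    rw [h0, norm_mul, ← dist_eq_norm, Metric.mem_sphere.1 ht]
    linarith
  have h2 : ∀ᶠ u in nhds (0 : ℂ), ‖g u t0‖ < ‖P‖ * r / 2 := by
    have hcc : ContinuousAt (fun u : ℂ => ‖g u t0‖) 0 := by
      have h3 : ContinuousAt (fun u : ℂ => (u, t0)) 0 := by fun_prop
      exact (ContinuousAt.comp (f := fun u : ℂ => (u, t0)) (hc t0) h3).norm
    refine hcc.eventually_lt_const ?_
    simp only
    rw [h0, sub_self, mul_zero, norm_zero]
    linarith
  filter_upwards [h1, h2, hd] with u hu1 hu2 hu3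
  by_contra hcon
  push Not at hcon
  have hdiff : DiffContOnCl ℂ (fun t => (g u t)⁻¹) (Metric.ball t0 r) := by
    apply DifferentiableOn.diffContOnCl
    rw [closure_ball t0 hr.ne']
    intro t ht
    exact ((hu3 t ht).inv (hcon t ht)).differentiableWithinAt
  have hle := Complex.norm_le_of_forall_mem_frontier_norm_le (C := (‖P‖ * r / 2)⁻¹)
    Metric.isBounded_ball hdiff ?_ (subset_closure (Metric.mem_ball_self hr))
  · rw [norm_inv] at hle
    have hpos : 0 < ‖g u t0‖ :=
      norm_pos_iff.2 (hcon t0 (Metric.mem_closedBall_self hr.le))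
    have := (inv_le_inv₀ hpos (by positivity)).1 hle
    linarith
  · intro t ht
    rw [frontier_ball t0 hr.ne'] at ht
    rw [norm_inv]
    exact inv_anti₀ (by positivity) (hu1 t ht).le

variable {ι : Type*} [Fintype ι] [DecidableEq ι]

/-- The rescaled matrix used for the asymptotics. -/
def Gm (q : ι → ℕ) (B : Matrix (GC q) (GC q) ℂ) (x : ι → ℂ) (l : ι) (n0 : GC q) (μ u t : ℂ) :
    Matrix (GC q) (GC q) ℂ := Matrix.of fun n n' =>
  (if n = n' then al q x n else 0) + (if n = n0 then 1 else u) *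
    ((if n = n' then rt (q l) (n l : ℕ) * t +
      u * ∑ j, (rt (q j) (n j : ℕ) * (x j + u * (if j = l then t else 0)))⁻¹ else 0) +
      (B - μ • (1 : Matrix (GC q) (GC q) ℂ)) n n')

lemma Gm_det (q : ι → ℕ) (B : Matrix (GC q) (GC q) ℂ) (x : ι → ℂ) (l : ι) (n0 : GC q)
    (hn0 : ∀ j, (n0 j : ℕ) = 0) (hx0 : al q x n0 = 0) (μ u t : ℂ) (hu : u ≠ 0) :
    (Gm q B x l n0 μ u t).det = (∏ n : GC q, (if n = n0 then 1 else u)) *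
      (FM q B (fun j => u⁻¹ * (x j + u * (if j = l then t else 0)))
        - μ • (1 : Matrix (GC q) (GC q) ℂ)).det := by
  rw [← Matrix.det_mul_column]
  congr 1
  ext n n'
  simp only [Gm, Matrix.of_apply]
  rw [FM, add_sub_assoc, Matrix.add_apply, mul_add, mul_add, ← add_assoc]
  congr 1
  by_cases h : n = n'
  · subst h
    have hA : Ad q (fun j => u⁻¹ * (x j + u * (if j = l then t else 0))) n =
        u⁻¹ * al q x n + (rt (q l) (n l : ℕ) * t +
        u * ∑ j, (rt (q j) (n j : ℕ) * (x j + u * (if j = l then t else 0)))⁻¹) := by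
      have e1 : rt (q l) (n l : ℕ) * t = ∑ j, rt (q j) (n j : ℕ) * (if j = l then t else 0) := by
        simp
      rw [Ad, al, e1, Finset.mul_sum, Finset.mul_sum, ← Finset.sum_add_distrib,
        ← Finset.sum_add_distrib]
      refine Finset.sum_congr rfl fun j _ => ?_
      rw [mul_left_comm (rt (q j) _), mul_inv, inv_inv, mul_add (rt (q j) _), mul_add u⁻¹,
        mul_left_comm (rt (q j) _) u, inv_mul_cancel_left₀ hu]
      ring
    rw [Matrix.diagonal_apply_eq, hA, if_pos rfl, if_pos rfl, mul_add (if n = n0 then 1 else u)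
      (u⁻¹ * _)]
    congr 1
    by_cases hn : n = n0
    · rw [hn, hx0]; simp
    · rw [if_neg hn, mul_inv_cancel_left₀ hu]
  · simp [h]

lemma Gm_zero (q : ι → ℕ) (B : Matrix (GC q) (GC q) ℂ) (x : ι → ℂ) (l : ι) (n0 : GC q)
    (hn0 : ∀ j, (n0 j : ℕ) = 0) (hx0 : al q x n0 = 0) (μ t : ℂ) :
    (Gm q B x l n0 μ 0 t).det = (∏ n : GC q, (if n = n0 then 1 else al q x n)) *
      (t + B n0 n0 - μ) := by
  let rr : GC q → ℂ := fun n' => (if n0 = n' then t else 0) +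
    (B - μ • (1 : Matrix (GC q) (GC q) ℂ)) n0 n'
  have h1 : Gm q B x l n0 μ 0 t = Matrix.of fun n n' => (if n = n0 then 1 else al q x n) *
      ((1 : Matrix (GC q) (GC q) ℂ).updateRow n0 rr) n n' := by
    ext n n'
    simp only [Gm, Matrix.of_apply]
    by_cases hn : n = n0
    · subst hn
      have : rt (q l) ((n l : ℕ) : ℤ) = 1 := by rw [hn0 l]; exact rt_zero _
      simp [rr, hx0, this]
    · simp [hn, Matrix.one_apply]
  rw [h1, Matrix.det_mul_column]
  congr 1
  rw [← Matrix.cramer_transpose_apply]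
  simp [rr]
  ring

lemma Gm_continuousAt (q : ι → ℕ) (B : Matrix (GC q) (GC q) ℂ) (x : ι → ℂ) (hx : ∀ j, x j ≠ 0)
    (l : ι) (n0 : GC q) (μ t : ℂ) :
    ContinuousAt (fun p : ℂ × ℂ => (Gm q B x l n0 μ p.1 p.2).det) (0, t) := by
  have hM : ContinuousAt (fun p : ℂ × ℂ => Gm q B x l n0 μ p.1 p.2) (0, t) := by
    refine continuousAt_pi.2 fun n => continuousAt_pi.2 fun n' => ?_
    simp only [Gm, Matrix.of_apply]
    have hinv : ∀ j, ContinuousAt (fun p : ℂ × ℂ =>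
        (rt (q j) (n j : ℕ) * (x j + p.1 * (if j = l then p.2 else 0)))⁻¹) (0, t) := by
      intro j
      have hne : rt (q j) ((n j : ℕ) : ℤ) ≠ 0 := rt_ne_zero _ _
      have hxj := hx j
      apply ContinuousAt.inv₀
      · split_ifs <;> fun_prop
      · simp [hne, hxj]
    have hsum : ContinuousAt (fun p : ℂ × ℂ =>
        ∑ j, (rt (q j) (n j : ℕ) * (x j + p.1 * (if j = l then p.2 else 0)))⁻¹) (0, t) :=
      tendsto_finsetSum _ (fun j _ => hinv j)
    split_ifs <;> fun_prop
  exact ContinuousAt.comp (g := fun M : Matrix (GC q) (GC q) ℂ => M.det)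
    (f := fun p : ℂ × ℂ => Gm q B x l n0 μ p.1 p.2)
    (Continuous.matrix_det continuous_id).continuousAt hM

lemma Gm_differentiableAt (q : ι → ℕ) (B : Matrix (GC q) (GC q) ℂ) (x : ι → ℂ)
    (hx : ∀ j, x j ≠ 0) (l : ι) (n0 : GC q) (μ u t : ℂ) (hut : x l + u * t ≠ 0) :
    DifferentiableAt ℂ (fun t => (Gm q B x l n0 μ u t).det) t := by
  have hent : ∀ n n', DifferentiableAt ℂ (fun t => Gm q B x l n0 μ u t n n') t := by
    intro n n'
    simp only [Gm, Matrix.of_apply]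
    have hinv : ∀ j, DifferentiableAt ℂ (fun t : ℂ =>
        (rt (q j) (n j : ℕ) * (x j + u * (if j = l then t else 0)))⁻¹) t := by
      intro j
      have hne : rt (q j) ((n j : ℕ) : ℤ) ≠ 0 := rt_ne_zero _ _
      apply DifferentiableAt.fun_inv
      · split_ifs <;> fun_prop
      · have hxj := hx j
        split_ifs with h
        · subst h
          exact mul_ne_zero hne hut
        · simp [hne, hxj]
    have hsum : DifferentiableAt ℂ (fun t : ℂ =>
        ∑ j, (rt (q j) (n j : ℕ) * (x j + u * (if j = l then t else 0)))⁻¹) t :=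
      DifferentiableAt.fun_sum (fun j _ => hinv j)
    split_ifs <;> fun_prop
  simp only [Matrix.det_apply]
  apply DifferentiableAt.fun_sum
  intro σ _
  apply DifferentiableAt.fun_const_smul
  exact DifferentiableAt.fun_finsetProd (fun i _ => hent _ _)

lemma case_one [Nontrivial ι] (q : ι → ℕ) (hq : ∀ j, 0 < q j)
    (hco : ∀ i j, i ≠ j → Nat.Coprime (q i) (q j)) (B B' : Matrix (GC q) (GC q) ℂ) (b b' : ℂ)
    (hB : ∀ n, B n n = b) (hB' : ∀ n, B' n n = b') (A' : Set ℂ) (hA' : A'.Finite) (lam0 a : ℂ)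
    (H : ∀ z : ι → ℂ, (∀ j, z j ≠ 0) → IsEig (FM q B z) (lam0 - a) →
      ∃ c ∈ A', IsEig (FM q B' z) (lam0 - c)) :
    a + (b - b') ∈ A' := by
  classical
  by_contra hcon
  let n0 : GC q := fun j => ⟨0, hq j⟩
  have hn0 : ∀ j, (n0 j : ℕ) = 0 := fun j => rfl
  obtain ⟨x, hx, hx0, hxn⟩ := exists_special q hq hco n0 hn0
  let l : ι := Classical.arbitrary ι
  have hP : (∏ n : GC q, (if n = n0 then 1 else al q x n)) ≠ 0 := by
    apply Finset.prod_ne_zero_iff.2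
    intro n _
    split_ifs with h
    · exact one_ne_zero
    · exact hxn n h
  set P := (∏ n : GC q, (if n = n0 then 1 else al q x n)) with hPdef
  let t0 : ℂ := lam0 - a - b
  have hev1 : ∀ᶠ p in nhds ((0 : ℂ), t0), ∀ c ∈ A', (Gm q B' x l n0 (lam0 - c) p.1 p.2).det ≠ 0 := by
    rw [Filter.eventually_all_finite hA']
    intro c hc
    apply (Gm_continuousAt q B' x hx l n0 (lam0 - c) t0).eventually_ne
    simp only
    rw [Gm_zero q B' x l n0 hn0 hx0, hB', ← hPdef]
    refine mul_ne_zero hP ?_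
    intro h0
    apply hcon
    have : a + (b - b') = c := by
      simp only [t0] at h0
      linear_combination -h0
    rwa [this]
  have hev2 : ∀ᶠ p in nhds ((0 : ℂ), t0), x l + p.1 * p.2 ≠ 0 := by
    have hcc : ContinuousAt (fun p : ℂ × ℂ => x l + p.1 * p.2) (0, t0) := by fun_prop
    apply hcc.eventually_ne
    simpa using hx l
  obtain ⟨ε, hε, hev⟩ := Metric.eventually_nhds_iff.1 (hev1.and hev2)
  have hin : ∀ u : ℂ, ‖u‖ < ε → ∀ t ∈ Metric.closedBall t0 (ε / 2),
      (∀ c ∈ A', (Gm q B' x l n0 (lam0 - c) u t).det ≠ 0) ∧ x l + u * t ≠ 0 := by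
    intro u hu t ht
    refine hev (y := (u, t)) ?_
    rw [Prod.dist_eq]
    refine max_lt (by simpa using hu) ?_
    have := Metric.mem_closedBall.1 ht
    simp only
    linarith
  have hball : ∀ᶠ u in nhds (0 : ℂ), ‖u‖ < ε := by
    filter_upwards [Metric.ball_mem_nhds (0 : ℂ) hε] with u hu
    simpa using hu
  have hz := eventually_zero (fun u t => (Gm q B x l n0 (lam0 - a) u t).det) t0 (ε / 2)
    (by positivity) P hP (fun t => Gm_continuousAt q B x hx l n0 (lam0 - a) t)
    (fun t => by
      rw [Gm_zero q B x l n0 hn0 hx0, hB, ← hPdef]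
      simp only [t0]; ring)
    (by
      filter_upwards [hball] with u hu t ht
      exact Gm_differentiableAt q B x hx l n0 _ u t (hin u hu t ht).2)
  have hboth := hz.and hball
  have hfreq : ∃ᶠ u in nhds (0 : ℂ), u ≠ 0 := by
    have : Filter.NeBot (nhdsWithin (0 : ℂ) {0}ᶜ) := inferInstance
    exact Filter.frequently_iff_neBot.2 this
  obtain ⟨u, hu0, ⟨t, ht, htz⟩, hu⟩ := (hfreq.and_eventually hboth).exists
  obtain ⟨hnz, hxl⟩ := hin u hu t ht
  have hprod : (∏ n : GC q, (if n = n0 then 1 else u)) ≠ 0 := by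
    apply Finset.prod_ne_zero_iff.2
    intro n _
    split_ifs
    · exact one_ne_zero
    · exact hu0
  rw [Gm_det q B x l n0 hn0 hx0 _ u t hu0] at htz
  have hzz := (mul_eq_zero.1 htz).resolve_left hprod
  obtain ⟨c, hc, hce⟩ := H (fun j => u⁻¹ * (x j + u * (if j = l then t else 0))) (by
    intro j
    refine mul_ne_zero (inv_ne_zero hu0) ?_
    split_ifs with h
    · rw [h]; exact hxl
    · simpa using hx j) hzz
  apply hnz c hc
  rw [Gm_det q B' x l n0 hn0 hx0 _ u t hu0, hce, mul_zero]

end CaseOne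

section BlockPart

lemma exists_quad_root {N : Type*} [Fintype N] [DecidableEq N] [Nonempty N]
    (D B D' : Matrix N N ℂ) (hD : D.det ≠ 0) (hD' : D'.det ≠ 0) :
    ∃ z : ℂ, z ≠ 0 ∧ (z ^ 2 • D + z • B + D').det = 0 := by
  have hpoly : ∀ D B D' : Matrix N N ℂ, ∃ p : Polynomial ℂ, ∀ z : ℂ,
      p.eval z = (z ^ 2 • D + z • B + D').det := by
    intro D B D'
    refine ⟨(Matrix.of fun i j => Polynomial.X ^ 2 * Polynomial.C (D i j) +
      Polynomial.X * Polynomial.C (B i j) + Polynomial.C (D' i j)).det, fun z => ?_⟩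
    rw [← Polynomial.coe_evalRingHom, RingHom.map_det]
    congr 1
    ext i j
    simp
    ring
  obtain ⟨p, hp⟩ := hpoly D B D'
  obtain ⟨p2, hp2⟩ := hpoly D' B D
  have hp0 : p.eval 0 ≠ 0 := by rw [hp]; simpa using hD'
  by_contra hcon
  push Not at hcon
  have hdeg : p.degree = 0 := by
    by_contra hd
    obtain ⟨z, hz⟩ := IsAlgClosed.exists_root p hd
    have hz' : p.eval z = 0 := hz
    by_cases h0 : z = 0
    · rw [h0] at hz'; exact hp0 hz'
    · rw [hp] at hz'; exact hcon z h0 hz'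
  rw [Polynomial.eq_C_of_degree_eq_zero hdeg] at hp
  simp only [Polynomial.eval_C] at hp
  have heq : p2 = Polynomial.X ^ (2 * Fintype.card N) * Polynomial.C (p.coeff 0) := by
    apply Polynomial.eq_of_infinite_eval_eq
    have hinf : ({0}ᶜ : Set ℂ).Infinite := Set.Finite.infinite_compl (Set.finite_singleton 0)
    refine hinf.mono ?_
    intro u hu
    have hu0 : u ≠ 0 := by simpa using hu
    rw [Set.mem_ofPred_eq, hp2, Polynomial.eval_mul, Polynomial.eval_pow, Polynomial.eval_X,
      Polynomial.eval_C, hp u⁻¹, pow_mul, ← Matrix.det_smul]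
    congr 1
    rw [smul_add, smul_add, smul_smul, smul_smul]
    have e1 : u ^ 2 * u⁻¹ ^ 2 = 1 := by field_simp
    have e2 : u ^ 2 * u⁻¹ = u := by field_simp
    rw [e1, e2, one_smul]
    abel
  have h0 := hp2 0
  rw [heq] at h0
  simp at h0
  exact hD h0.symm

lemma finite_eig {N : Type*} [Fintype N] [DecidableEq N] (M : Matrix N N ℂ) :
    {a | IsEig M a}.Finite := by
  have h0 : M.charpoly ≠ 0 := M.charpoly_monic.ne_zero
  refine (Polynomial.finite_setOfPred_isRoot h0).subset ?_
  intro a ha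
  exact (isEig_iff_root _ _).1 ha

lemma FM_add_smul {ι : Type*} [Fintype ι] [DecidableEq ι] (q : ι → ℕ)
    (B : Matrix (GC q) (GC q) ℂ) (c : ℂ) (z : ι → ℂ) :
    FM q (B + c • 1) z = FM q B z + c • 1 := by
  rw [FM, FM, add_assoc]

variable {ι₁ ι₂ : Type*} [Fintype ι₁] [DecidableEq ι₁] [Fintype ι₂] [DecidableEq ι₂]

/-- The one sided relation between two pairs of block potentials coming from the Fermi varieties. -/
def Link (q₁ : ι₁ → ℕ) (q₂ : ι₂ → ℕ) (B₁ B₁' : Matrix (GC q₁) (GC q₁) ℂ)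
    (B₂ B₂' : Matrix (GC q₂) (GC q₂) ℂ) (lam0 : ℂ) : Prop :=
  ∀ z₁ z₂, (∀ j, z₁ j ≠ 0) → (∀ j, z₂ j ≠ 0) →
    (∃ a, IsEig (FM q₁ B₁ z₁) a ∧ IsEig (FM q₂ B₂ z₂) (lam0 - a)) →
    (∃ a, IsEig (FM q₁ B₁' z₁) a ∧ IsEig (FM q₂ B₂' z₂) (lam0 - a))

lemma Link.symm {q₁ : ι₁ → ℕ} {q₂ : ι₂ → ℕ} {B₁ B₁' : Matrix (GC q₁) (GC q₁) ℂ}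
    {B₂ B₂' : Matrix (GC q₂) (GC q₂) ℂ} {lam0 : ℂ} (h : Link q₁ q₂ B₁ B₁' B₂ B₂' lam0) :
    Link q₂ q₁ B₂ B₂' B₁ B₁' lam0 := by
  intro z₂ z₁ h₂ h₁ ⟨a, ha, hb⟩
  obtain ⟨c, hc, hd⟩ := h z₁ z₂ h₁ h₂ ⟨lam0 - a, hb, by simpa using ha⟩
  exact ⟨lam0 - c, hd, by simpa using hc⟩

lemma block_one [Nonempty ι₁] [Nontrivial ι₂] (q₁ : ι₁ → ℕ) (q₂ : ι₂ → ℕ)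
    (hq₁ : ∀ j, 0 < q₁ j) (hq₂ : ∀ j, 0 < q₂ j)
    (hco : ∀ i j, i ≠ j → Nat.Coprime (q₂ i) (q₂ j))
    (B₁ B₁' : Matrix (GC q₁) (GC q₁) ℂ) (B₂ B₂' : Matrix (GC q₂) (GC q₂) ℂ) (b b' : ℂ)
    (hB : ∀ n, B₂ n n = b) (hB' : ∀ n, B₂' n n = b') (lam0 : ℂ)
    (H : Link q₁ q₂ B₁ B₁' B₂ B₂' lam0) (z : ι₁ → ℂ) (hz : ∀ j, z j ≠ 0) (lam : ℂ) :
    (FM q₁ (B₁ + (b - b') • 1) z - lam • (1 : Matrix (GC q₁) (GC q₁) ℂ)).det =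
      (FM q₁ B₁' z - lam • (1 : Matrix (GC q₁) (GC q₁) ℂ)).det := by
  have key : ∀ z₁, (∀ j, z₁ j ≠ 0) → ∀ a, IsEig (FM q₁ B₁ z₁) a →
      IsEig (FM q₁ B₁' z₁) (a + (b - b')) := by
    intro z₁ hz₁ a ha
    exact case_one q₂ hq₂ hco B₂ B₂' b b' hB hB' {c | IsEig (FM q₁ B₁' z₁) c} (finite_eig _) lam0 a
      (fun z₂ hz₂ h2 => H z₁ z₂ hz₁ hz₂ ⟨a, ha, h2⟩)
  obtain ⟨x, hx, -, hinj⟩ := exists_generic q₁ hq₁ 1 one_pos (fun j => Nat.coprime_one_right _)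
  have hinj' : Function.Injective (al q₁ x) := fun n m h => (hinj n m 0 0 (by rw [h])).1
  obtain ⟨T, hT⟩ := FM_spectrum q₁ (B₁ + (b - b') • 1) x z hx hinj' one_pos
  refine det_eq_of_large q₁ _ _ x z hz lam T (fun τ hτ => ?_)
  obtain ⟨h1, f, hf, hfe, -⟩ := hT τ hτ
  refine ⟨h1, det_eq_of_eig _ _ f hf (fun n => (hfe _).2 ⟨n, rfl⟩) (fun n => ?_) lam⟩
  have h2 := (hfe _).2 ⟨n, rfl⟩
  rw [FM_add_smul, isEig_add_smul] at h2
  simpa using key _ h1 _ h2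

lemma oneD_aux {N : Type*} [Fintype N] [DecidableEq N] (β : N → ℂ) (hβ : Function.Injective β)
    (hβ1 : ∀ k, ‖β k‖ = 1) {δ : ℝ} (hδ : 0 < δ) (K : ℝ) :
    ∃ W : ℝ, ∀ (M : Matrix N N ℂ) (w : ℂ) (E : Matrix N N ℂ), (∀ i j, ‖E i j‖ ≤ K) →
      M = Matrix.diagonal (fun n => w * β n) + E →
      (∀ e, IsEig M e → ‖e‖ ≤ W) ∨ ∃ f : N → ℂ,
        (∀ e, IsEig M e ↔ ∃ n, e = f n) ∧ ∀ n, ‖f n - w * β n‖ ≤ δ * ‖w‖ := by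
  obtain ⟨S, hS, H⟩ := spectrum_large β hβ hδ K
  refine ⟨Fintype.card N * (S + K), fun M w E hE hM => ?_⟩
  by_cases hw : S ≤ ‖w‖
  · obtain ⟨f, -, hf, hf2⟩ := H w hw E hE
    right
    exact ⟨f, by rw [hM]; exact hf, hf2⟩
  · left
    intro e he
    apply eig_norm_le M _ _ e he
    intro i j
    rw [hM, Matrix.add_apply]
    refine (norm_add_le _ _).trans (add_le_add ?_ (hE i j))
    rw [Matrix.diagonal_apply]
    split_ifs
    · rw [norm_mul, hβ1, mul_one]; exact (not_le.1 hw).le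
    · simpa using hS.le

lemma Ad_unique [Unique ι₂] (q₂ : ι₂ → ℕ) (z : ι₂ → ℂ) (n : GC q₂) :
    Ad q₂ z n = rt (q₂ default) (n default : ℕ) * z default +
      (rt (q₂ default) (n default : ℕ) * z default)⁻¹ := by
  rw [Ad, Fintype.sum_unique]

lemma gc_ext_unique [Unique ι₂] (q₂ : ι₂ → ℕ) {n m : GC q₂} (h : n default = m default) :
    n = m := by
  funext j
  rw [Unique.eq_default j]; exact h

lemma oneD [Unique ι₂] (q₂ : ι₂ → ℕ) (B : Matrix (GC q₂) (GC q₂) ℂ) {δ : ℝ} (hδ : 0 < δ) :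
    ∃ W : ℝ, ∀ z : ι₂ → ℂ, (∀ j, z j ≠ 0) →
      (∀ e, IsEig (FM q₂ B z) e → ‖e‖ ≤ W) ∨ ∃ (w : ℂ) (β f : GC q₂ → ℂ),
        ((β = fun n => rt (q₂ default) (n default : ℕ)) ∨
          (β = fun n => (rt (q₂ default) (n default : ℕ))⁻¹)) ∧
        (∀ e, IsEig (FM q₂ B z) e ↔ ∃ n, e = f n) ∧ ∀ n, ‖f n - w * β n‖ ≤ δ * ‖w‖ := by
  have inj1 : Function.Injective (fun n : GC q₂ => rt (q₂ default) (n default : ℕ)) := by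
    intro n m h
    exact gc_ext_unique q₂ (Fin.ext (rt_inj (n default).2 (m default).2 h))
  have inj2 : Function.Injective (fun n : GC q₂ => (rt (q₂ default) (n default : ℕ))⁻¹) := by
    intro n m h
    exact inj1 (inv_injective h)
  set K : ℝ := 1 + ∑ i, ∑ j, ‖B i j‖ with hK
  have hBK : ∀ (c : GC q₂ → ℂ), (∀ n, ‖c n‖ ≤ 1) → ∀ i j, ‖(Matrix.diagonal c + B) i j‖ ≤ K := by
    intro c hc i j
    rw [Matrix.add_apply]
    refine (norm_add_le _ _).trans (add_le_add ?_ ?_)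
    · rw [Matrix.diagonal_apply]
      split_ifs
      · exact hc i
      · simp
    · refine le_trans ?_ (Finset.single_le_sum (f := fun i => ∑ j, ‖B i j‖)
        (fun i _ => Finset.sum_nonneg fun j _ => norm_nonneg _) (Finset.mem_univ i))
      exact Finset.single_le_sum (f := fun j => ‖B i j‖)
        (fun j _ => norm_nonneg _) (Finset.mem_univ j)
  obtain ⟨W1, H1⟩ := oneD_aux _ inj1 (fun k => norm_rt _ _) hδ K
  obtain ⟨W2, H2⟩ := oneD_aux _ inj2 (fun k => by rw [norm_inv, norm_rt, inv_one]) hδ K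
  refine ⟨max W1 W2, fun z hz => ?_⟩
  by_cases hz1 : 1 ≤ ‖z default‖
  · rcases H1 (FM q₂ B z) (z default) (Matrix.diagonal (fun n : GC q₂ =>
      (rt (q₂ default) (n default : ℕ) * z default)⁻¹) + B) (hBK _ (fun n => by
        rw [norm_inv, norm_mul, norm_rt, one_mul]
        exact inv_le_one_of_one_le₀ hz1)) (by
        rw [FM, ← add_assoc, Matrix.diagonal_add]
        congr 2
        ext n
        rw [Ad_unique]; ring) with h | ⟨f, hf1, hf2⟩
    · left
      exact fun e he => (h e he).trans (le_max_left _ _)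
    · right
      exact ⟨z default, _, f, Or.inl rfl, hf1, hf2⟩
  · rcases H2 (FM q₂ B z) (z default)⁻¹ (Matrix.diagonal (fun n : GC q₂ =>
      (rt (q₂ default) (n default : ℕ) * z default)) + B) (hBK _ (fun n => by
        rw [norm_mul, norm_rt, one_mul]
        exact (not_le.1 hz1).le)) (by
        rw [FM, ← add_assoc, Matrix.diagonal_add]
        congr 2
        ext n
        rw [Ad_unique, mul_inv]; ring) with h | ⟨f, hf1, hf2⟩
    · left
      exact fun e he => (h e he).trans (le_max_right _ _)
    · right
      exact ⟨(z default)⁻¹, _, f, Or.inr rfl, hf1, hf2⟩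

lemma exists_z [Unique ι₂] (q₂ : ι₂ → ℕ) (hq₂ : ∀ j, 0 < q₂ j) (B : Matrix (GC q₂) (GC q₂) ℂ)
    (μ : ℂ) : ∃ z : ι₂ → ℂ, (∀ j, z j ≠ 0) ∧ IsEig (FM q₂ B z) μ := by
  haveI : Nonempty (GC q₂) := ⟨fun j => ⟨0, hq₂ j⟩⟩
  obtain ⟨z, hz, hdet⟩ := exists_quad_root
    (Matrix.diagonal (fun n : GC q₂ => rt (q₂ default) (n default : ℕ)))
    (B - μ • (1 : Matrix (GC q₂) (GC q₂) ℂ))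
    (Matrix.diagonal (fun n : GC q₂ => (rt (q₂ default) (n default : ℕ))⁻¹))
    (by
      rw [Matrix.det_diagonal]
      exact Finset.prod_ne_zero_iff.2 fun n _ => rt_ne_zero _ _)
    (by
      rw [Matrix.det_diagonal]
      exact Finset.prod_ne_zero_iff.2 fun n _ => inv_ne_zero (rt_ne_zero _ _))
  refine ⟨fun _ => z, fun _ => hz, ?_⟩
  have hmat : z ^ 2 • (Matrix.diagonal (fun n : GC q₂ => rt (q₂ default) (n default : ℕ))) +
      z • (B - μ • (1 : Matrix (GC q₂) (GC q₂) ℂ)) +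
      (Matrix.diagonal (fun n : GC q₂ => (rt (q₂ default) (n default : ℕ))⁻¹)) =
      z • (FM q₂ B (fun _ => z) - μ • (1 : Matrix (GC q₂) (GC q₂) ℂ)) := by
    rw [FM, add_sub_assoc, smul_add, ← sub_eq_zero]
    have : z • Matrix.diagonal (Ad q₂ (fun _ => z)) =
      z ^ 2 • (Matrix.diagonal (fun n : GC q₂ => rt (q₂ default) (n default : ℕ))) +
      (Matrix.diagonal (fun n : GC q₂ => (rt (q₂ default) (n default : ℕ))⁻¹)) := by
      ext i j
      by_cases hij : i = j
      · subst hij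
        simp only [Matrix.smul_apply, Matrix.add_apply, Matrix.diagonal_apply_eq, smul_eq_mul,
          Ad_unique]
        have := rt_ne_zero (q₂ default) (i default : ℕ)
        field_simp
      · simp [hij]
    rw [this]
    abel
  rw [hmat, Matrix.det_smul] at hdet
  exact (mul_eq_zero.1 hdet).resolve_left (pow_ne_zero _ hz)

/-- The inequality bookkeeping for the second case. -/
lemma gap_estimate (τ w αn αm βk βl a b' lam0 C : ℂ) (δ R : ℝ) (hδ : 0 < δ) (hδ2 : δ ≤ 1 / 2)
    (hR : ‖αn‖ ≤ R) (hk : ‖βk‖ = 1) (hl : ‖βl‖ = 1)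
    (h1 : ‖a - τ * αn‖ ≤ δ * ‖τ‖) (h2 : ‖b' - τ * αm‖ ≤ δ * ‖τ‖)
    (h3 : ‖lam0 - a - w * βk‖ ≤ δ * ‖w‖) (h4 : ‖lam0 - b' - C - w * βl‖ ≤ δ * ‖w‖) :
    ‖τ‖ * ‖αn * βl - αm * βk‖ ≤ δ * (4 + 4 * R) * ‖τ‖ + 4 * (‖lam0‖ + ‖C‖) := by
  have e1 : ‖τ * αn + w * βk‖ ≤ δ * ‖τ‖ + δ * ‖w‖ + ‖lam0‖ := by
    have : τ * αn + w * βk = lam0 - (a - τ * αn) - (lam0 - a - w * βk) := by ring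
    rw [this]
    have i1 := norm_sub_le (lam0 - (a - τ * αn)) (lam0 - a - w * βk)
    have i2 := norm_sub_le lam0 (a - τ * αn)
    linarith
  have e2 : ‖τ * αm + w * βl‖ ≤ δ * ‖τ‖ + δ * ‖w‖ + ‖lam0‖ + ‖C‖ := by
    have : τ * αm + w * βl = lam0 - C - (b' - τ * αm) - (lam0 - b' - C - w * βl) := by ring
    rw [this]
    have i1 := norm_sub_le (lam0 - C - (b' - τ * αm)) (lam0 - b' - C - w * βl)
    have i2 := norm_sub_le (lam0 - C) (b' - τ * αm)
    have i3 := norm_sub_le lam0 C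
    linarith
  have e3 : ‖w‖ ≤ ‖τ‖ * R + ‖τ * αn + w * βk‖ := by
    have i1 : ‖w * βk‖ = ‖w‖ := by rw [norm_mul, hk, mul_one]
    have i2 : w * βk = (τ * αn + w * βk) - τ * αn := by ring
    have i3 := norm_sub_le (τ * αn + w * βk) (τ * αn)
    rw [← i2, i1, norm_mul] at i3
    have i4 : ‖τ‖ * ‖αn‖ ≤ ‖τ‖ * R := by gcongr
    linarith
  have e4 : ‖w‖ ≤ 2 * (‖τ‖ * R + δ * ‖τ‖ + ‖lam0‖) := by
    have : δ * ‖w‖ ≤ 1 / 2 * ‖w‖ := by gcongr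
    linarith
  have e5 : ‖τ‖ * ‖αn * βl - αm * βk‖ ≤ ‖τ * αn + w * βk‖ + ‖τ * αm + w * βl‖ := by
    rw [← norm_mul]
    have : τ * (αn * βl - αm * βk) = (τ * αn + w * βk) * βl - (τ * αm + w * βl) * βk := by ring
    rw [this]
    have i1 := norm_sub_le ((τ * αn + w * βk) * βl) ((τ * αm + w * βl) * βk)
    rw [norm_mul, norm_mul, hk, hl, mul_one, mul_one] at i1
    exact i1
  have hτ := norm_nonneg τ
  have hlam := norm_nonneg lam0
  have hC := norm_nonneg C
  have e6 : δ * ‖w‖ ≤ δ * (2 * (‖τ‖ * R + δ * ‖τ‖ + ‖lam0‖)) := by gcongr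
  have e7 : δ * (δ * ‖τ‖) ≤ δ * (1 / 2 * ‖τ‖) := by gcongr
  have e8 : δ * ‖lam0‖ ≤ 1 / 2 * ‖lam0‖ := by gcongr
  nlinarith

lemma exists_delta (m0 g R : ℝ) (hm0 : 0 < m0) (hg : 0 < g) (hR : 0 ≤ R) :
    ∃ δ : ℝ, 0 < δ ∧ δ ≤ 1 / 2 ∧ δ ≤ m0 / 2 ∧ δ * (4 + 4 * R) ≤ g / 2 := by
  have hp : 0 < 4 + 4 * R := by positivity
  refine ⟨min (1 / 2) (min (m0 / 2) (g / 2 / (4 + 4 * R))),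
    lt_min (by norm_num) (lt_min (by linarith) (div_pos (by linarith) hp)), min_le_left _ _,
    (min_le_right _ _).trans (min_le_left _ _), ?_⟩
  exact (le_div_iff₀ hp).1 ((min_le_right _ _).trans (min_le_right _ _))


set_option maxHeartbeats 1000000 in
lemma block_two [Nonempty ι₁] [Unique ι₂] (q₁ : ι₁ → ℕ) (q₂ : ι₂ → ℕ)
    (hq₁ : ∀ j, 0 < q₁ j) (hq₂ : ∀ j, 0 < q₂ j)
    (hco : ∀ i j, Nat.Coprime (q₁ i) (q₂ j))
    (B₁ B₁' : Matrix (GC q₁) (GC q₁) ℂ) (B₂ B₂' : Matrix (GC q₂) (GC q₂) ℂ) (C lam0 : ℂ)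
    (H : Link q₁ q₂ B₁ B₁' B₂ B₂' lam0)
    (H2 : ∀ z : ι₂ → ℂ, (∀ j, z j ≠ 0) → ∀ lam : ℂ,
      (FM q₂ (B₂ + C • 1) z - lam • (1 : Matrix (GC q₂) (GC q₂) ℂ)).det =
      (FM q₂ B₂' z - lam • (1 : Matrix (GC q₂) (GC q₂) ℂ)).det)
    (z : ι₁ → ℂ) (hz : ∀ j, z j ≠ 0) (lam : ℂ) :
    (FM q₁ (B₁ + (-C) • 1) z - lam • (1 : Matrix (GC q₁) (GC q₁) ℂ)).det =
      (FM q₁ B₁' z - lam • (1 : Matrix (GC q₁) (GC q₁) ℂ)).det := by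
  classical
  obtain ⟨x, hx, hx0, hgen⟩ := exists_generic q₁ hq₁ (q₂ default) (hq₂ default)
    (fun j => hco j default)
  have hinj' : Function.Injective (al q₁ x) := fun n m h =>
    (hgen n m ⟨0, hq₂ default⟩ ⟨0, hq₂ default⟩ (by rw [h])).1
  haveI : Nonempty (GC q₁) := ⟨fun j => ⟨0, hq₁ j⟩⟩
  -- lower bound for the leading coefficients
  obtain ⟨nmin, -, hmin⟩ := Finset.exists_min_image Finset.univ (fun n => ‖al q₁ x n‖)
    Finset.univ_nonempty
  obtain ⟨m0, hm0⟩ : ∃ m0 : ℝ, m0 = ‖al q₁ x nmin‖ := ⟨_, rfl⟩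
  have hm0pos : 0 < m0 := hm0 ▸ norm_pos_iff.2 (hx0 _)
  simp only [← hm0] at hmin
  -- gap
  let J := {p : (GC q₁ × GC q₁) × (Fin (q₂ default) × Fin (q₂ default)) //
    ¬ (p.1.1 = p.1.2 ∧ p.2.1 = p.2.2)}
  obtain ⟨g, hg, hgap⟩ : ∃ g > 0, ∀ p : J, g ≤ ‖al q₁ x p.1.1.1 * rt (q₂ default) (p.1.2.2 : ℕ) -
      al q₁ x p.1.1.2 * rt (q₂ default) (p.1.2.1 : ℕ)‖ := by
    by_cases hne : Nonempty J
    · obtain ⟨p, -, hp⟩ := Finset.exists_min_image Finset.univ (fun p : J =>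
        ‖al q₁ x p.1.1.1 * rt (q₂ default) (p.1.2.2 : ℕ) -
        al q₁ x p.1.1.2 * rt (q₂ default) (p.1.2.1 : ℕ)‖) Finset.univ_nonempty
      refine ⟨_, ?_, fun p' => hp p' (Finset.mem_univ _)⟩
      refine norm_pos_iff.2 (sub_ne_zero.2 fun h => p.2 (hgen _ _ _ _ h))
    · exact ⟨1, one_pos, fun p => absurd ⟨p⟩ hne⟩
  have hgap1 : ∀ n m : GC q₁, ∀ k l : GC q₂,
      ‖al q₁ x n * rt (q₂ default) (l default : ℕ) -
      al q₁ x m * rt (q₂ default) (k default : ℕ)‖ < g → n = m ∧ k = l := by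
    intro n m k l h
    by_contra hcon
    have hcon' : ¬ (n = m ∧ k default = l default) :=
      fun h' => hcon ⟨h'.1, gc_ext_unique q₂ h'.2⟩
    exact absurd (hgap ⟨((n, m), (k default, l default)), hcon'⟩) (not_le.2 h)
  have hgap2 : ∀ n m : GC q₁, ∀ k l : GC q₂,
      ‖al q₁ x n * (rt (q₂ default) (l default : ℕ))⁻¹ -
      al q₁ x m * (rt (q₂ default) (k default : ℕ))⁻¹‖ < g → n = m ∧ k = l := by
    intro n m k l h
    have e := hgap1 n m l k ?_
    · exact ⟨e.1, e.2.symm⟩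
    · have h1 := rt_ne_zero (q₂ default) (l default : ℕ)
      have h2 := rt_ne_zero (q₂ default) (k default : ℕ)
      have : al q₁ x n * (rt (q₂ default) (l default : ℕ))⁻¹ -
        al q₁ x m * (rt (q₂ default) (k default : ℕ))⁻¹ =
        (al q₁ x n * (rt (q₂ default) (k default : ℕ)) -
        al q₁ x m * (rt (q₂ default) (l default : ℕ))) *
        ((rt (q₂ default) (l default : ℕ))⁻¹ * (rt (q₂ default) (k default : ℕ))⁻¹) := by
        field_simp
      rw [this, norm_mul, norm_mul, norm_inv, norm_inv, norm_rt, norm_rt] at h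
      simpa using h
  obtain ⟨R, hR0, hRn⟩ : ∃ R : ℝ, 0 ≤ R ∧ ∀ n, ‖al q₁ x n‖ ≤ R :=
    ⟨∑ n, ‖al q₁ x n‖, Finset.sum_nonneg fun _ _ => norm_nonneg _, fun n =>
      Finset.single_le_sum (f := fun n => ‖al q₁ x n‖) (fun _ _ => norm_nonneg _)
        (Finset.mem_univ n)⟩
  obtain ⟨δ, hδ, hδ2, hδm, hδg⟩ : ∃ δ : ℝ, 0 < δ ∧ δ ≤ 1 / 2 ∧ δ ≤ m0 / 2 ∧
      δ * (4 + 4 * R) ≤ g / 2 := exists_delta m0 g R hm0pos hg hR0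
  obtain ⟨T1, hT1⟩ := FM_spectrum q₁ B₁ x z hx hinj' hδ
  obtain ⟨T2, hT2⟩ := FM_spectrum q₁ B₁' x z hx hinj' hδ
  obtain ⟨W, hW⟩ := oneD q₂ B₂ hδ
  obtain ⟨L, hL⟩ : ∃ L : ℝ, L = ‖lam0‖ + ‖C‖ := ⟨_, rfl⟩
  have hL0 : 0 ≤ L := hL ▸ add_nonneg (norm_nonneg _) (norm_nonneg _)
  refine det_eq_of_large q₁ _ _ x z hz lam
    (max (max T1 T2) (max ((|W| + ‖lam0‖ + 1) / (m0 / 2)) ((4 * L + 1) / (g / 2)))) (fun τ hτ => ?_)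
  have hτ1 : T1 ≤ ‖τ‖ := (le_max_left _ _).trans ((le_max_left _ _).trans hτ)
  have hτ2 : T2 ≤ ‖τ‖ := (le_max_right _ _).trans ((le_max_left _ _).trans hτ)
  have hτ3 : |W| + ‖lam0‖ + 1 ≤ ‖τ‖ * (m0 / 2) := by
    rw [← div_le_iff₀ (by positivity)]
    exact (le_max_left _ _).trans ((le_max_right _ _).trans hτ)
  have hτ4 : 4 * L + 1 ≤ ‖τ‖ * (g / 2) := by
    rw [← div_le_iff₀ (by positivity)]
    exact (le_max_right _ _).trans ((le_max_right _ _).trans hτ)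
  obtain ⟨hnz, f, hf, hfe, hfa⟩ := hT1 τ hτ1
  obtain ⟨-, f', hf', hfe', hfa'⟩ := hT2 τ hτ2
  have key : ∀ n, IsEig (FM q₁ B₁' (fun j => z j + τ * x j)) (f n - C) := by
    intro n
    obtain ⟨z₂, hz₂, he⟩ := exists_z q₂ hq₂ B₂ (lam0 - f n)
    obtain ⟨b, hb, hb2⟩ := H _ z₂ hnz hz₂ ⟨f n, (hfe _).2 ⟨n, rfl⟩, he⟩
    obtain ⟨m, rfl⟩ := (hfe' _).1 hb
    rw [IsEig, ← H2 z₂ hz₂] at hb2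
    have hb3 : IsEig (FM q₂ B₂ z₂) (lam0 - f' m - C) := by
      rw [← isEig_add_smul, ← FM_add_smul]; exact hb2
    suffices f' m = f n - C by rw [← this]; exact hb
    rcases hW z₂ hz₂ with hsmall | ⟨w, β, F, hβ, hF, hFa⟩
    · exfalso
      have h1 := hsmall _ he
      have h2 : ‖τ * al q₁ x n‖ ≤ W + ‖lam0‖ + δ * ‖τ‖ := by
        have e : τ * al q₁ x n = lam0 - (lam0 - f n) - (f n - τ * al q₁ x n) := by ring
        rw [e]
        have i1 := norm_sub_le (lam0 - (lam0 - f n)) (f n - τ * al q₁ x n)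
        have i2 := norm_sub_le lam0 (lam0 - f n)
        have i3 := hfa n
        linarith
      have h3 : ‖τ‖ * m0 ≤ ‖τ * al q₁ x n‖ := by
        rw [norm_mul]
        have := hmin n (Finset.mem_univ n)
        gcongr
      have h4 : δ * ‖τ‖ ≤ m0 / 2 * ‖τ‖ := by gcongr
      have h5 := le_abs_self W
      linarith
    · obtain ⟨k, hk⟩ := (hF _).1 he
      obtain ⟨l, hl⟩ := (hF _).1 hb3
      have hβ1 : ∀ k, ‖β k‖ = 1 := by
        intro k
        rcases hβ with h | h
        · rw [h]; exact norm_rt _ _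
        · rw [h]; simp only; rw [norm_inv, norm_rt, inv_one]
      have hest := gap_estimate τ w (al q₁ x n) (al q₁ x m) (β k) (β l) (f n) (f' m) lam0 C δ R hδ
        hδ2 (hRn n) (hβ1 k) (hβ1 l) (hfa n) (hfa' m) (by rw [hk]; exact hFa k)
        (by rw [hl]; exact hFa l)
      rw [← hL] at hest
      have hτpos : 0 < ‖τ‖ := by
        rcases (norm_nonneg τ).lt_or_eq with h | h
        · exact h
        · rw [← h] at hτ4; linarith
      have hlt : ‖al q₁ x n * β l - al q₁ x m * β k‖ < g := by
        by_contra hge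
        push Not at hge
        have i1 : ‖τ‖ * g ≤ ‖τ‖ * ‖al q₁ x n * β l - al q₁ x m * β k‖ := by gcongr
        have i2 : δ * (4 + 4 * R) * ‖τ‖ ≤ g / 2 * ‖τ‖ := by gcongr
        linarith
      have hkl : n = m ∧ k = l := by
        rcases hβ with h | h
        · rw [h] at hlt; exact hgap1 n m k l hlt
        · rw [h] at hlt; exact hgap2 n m k l hlt
      rw [hkl.2, ← hl] at hk
      linear_combination hk
  refine ⟨hnz, det_eq_of_eig _ _ (fun n => f n - C) (fun n m h => hf (sub_left_injective h))
    (fun n => ?_) key lam⟩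
  rw [FM_add_smul, isEig_add_smul]
  simpa using (hfe _).2 ⟨n, rfl⟩

/-- The main two block statement. -/
lemma two_block [Nonempty ι₁] [Nonempty ι₂] (hcard : 3 ≤ Fintype.card ι₁ + Fintype.card ι₂)
    (q₁ : ι₁ → ℕ) (q₂ : ι₂ → ℕ) (hq₁ : ∀ j, 0 < q₁ j) (hq₂ : ∀ j, 0 < q₂ j)
    (hco₁ : ∀ i j, i ≠ j → Nat.Coprime (q₁ i) (q₁ j))
    (hco₂ : ∀ i j, i ≠ j → Nat.Coprime (q₂ i) (q₂ j))
    (hco : ∀ i j, Nat.Coprime (q₁ i) (q₂ j))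
    (B₁ B₁' : Matrix (GC q₁) (GC q₁) ℂ) (B₂ B₂' : Matrix (GC q₂) (GC q₂) ℂ) (b₁ b₁' b₂ b₂' : ℝ)
    (hB₁ : ∀ n, B₁ n n = b₁) (hB₁' : ∀ n, B₁' n n = b₁')
    (hB₂ : ∀ n, B₂ n n = b₂) (hB₂' : ∀ n, B₂' n n = b₂') (lam0 : ℂ)
    (H : Link q₁ q₂ B₁ B₁' B₂ B₂' lam0) :
    ∃ C : ℝ, ∀ z : ι₁ → ℂ, (∀ j, z j ≠ 0) → ∀ lam : ℂ,
      (FM q₁ (B₁ + (C : ℂ) • 1) z - lam • (1 : Matrix (GC q₁) (GC q₁) ℂ)).det =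
      (FM q₁ B₁' z - lam • (1 : Matrix (GC q₁) (GC q₁) ℂ)).det := by
  by_cases h2 : Nontrivial ι₂
  · refine ⟨b₂ - b₂', fun z hz lam => ?_⟩
    push_cast
    exact block_one q₁ q₂ hq₁ hq₂ hco₂ B₁ B₁' B₂ B₂' b₂ b₂' hB₂ hB₂' lam0 H z hz lam
  · have hs : Subsingleton ι₂ := not_nontrivial_iff_subsingleton.1 h2
    obtain ⟨i0⟩ := ‹Nonempty ι₂›
    haveI : Unique ι₂ := ⟨⟨i0⟩, fun a => Subsingleton.elim a i0⟩
    have hc2 : Fintype.card ι₂ = 1 := Fintype.card_eq_one_iff_nonempty_unique.2 ⟨this⟩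
    haveI : Nontrivial ι₁ := Fintype.one_lt_card_iff_nontrivial.1 (by omega)
    have hb := block_one q₂ q₁ hq₂ hq₁ hco₁ B₂ B₂' B₁ B₁' b₁ b₁' hB₁ hB₁' lam0 H.symm
    refine ⟨-(b₁ - b₁'), fun z hz lam => ?_⟩
    push_cast
    exact block_two q₁ q₂ hq₁ hq₂ hco B₁ B₁' B₂ B₂' (b₁ - b₁') lam0 H hb z hz lam

end BlockPart

section FourierPart

/-- The discrete Fourier transform over a general finite index type. -/
def gdft {ι : Type*} [Fintype ι] [DecidableEq ι] (q : ι → ℕ) (v : GC q → ℝ) (l : ι → ℤ) : ℂ :=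
  (1 / ∏ j, (q j : ℂ)) *
    ∑ n : GC q, (v n : ℂ) *
      Complex.exp (-(2 * Real.pi * Complex.I) * ∑ j, (l j : ℂ) * ((n j : ℕ) : ℂ) / (q j : ℂ))

/-- The matrix of a potential. -/
def Bmat {ι : Type*} [Fintype ι] [DecidableEq ι] (q : ι → ℕ) (v : GC q → ℝ) :
    Matrix (GC q) (GC q) ℂ := fun n n' =>
  gdft q v (fun j => ((n j : ℕ) : ℤ) - ((n' j : ℕ) : ℤ))

/-- Restriction of a potential to the fundamental cell. -/
def cellRes {ι : Type*} (q : ι → ℕ) (V : (ι → ℤ) → ℝ) (n : GC q) : ℝ :=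
  V (fun j => ((n j : ℕ) : ℤ))

lemma floquetMatrix_eq (d : ℕ) (q : Fin d → ℕ) (V : (Fin d → ℤ) → ℝ) (z : Fin d → ℂ) :
    floquetMatrix d q V z = FM q (Bmat q (cellRes q V)) z := by
  ext n n'
  simp only [floquetMatrix, FM, Matrix.add_apply, Matrix.diagonal_apply]
  rfl

lemma geom_zero (N : ℕ) (hN : 0 < N) (a b : Fin N) :
    ∑ m : Fin N, Complex.exp (-(2 * Real.pi * Complex.I) *
      ((((a : ℕ) : ℤ) - ((b : ℕ) : ℤ) : ℤ) : ℂ) * ((m : ℕ) : ℂ) / (N : ℂ)) =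
      if a = b then (N : ℂ) else 0 := by
  have hN' : (N : ℂ) ≠ 0 := by exact_mod_cast hN.ne'
  have key : ∀ m : ℕ, Complex.exp (-(2 * Real.pi * Complex.I) *
      ((((a : ℕ) : ℤ) - ((b : ℕ) : ℤ) : ℤ) : ℂ) * (m : ℂ) / (N : ℂ)) =
      (rt N (b : ℕ) / rt N (a : ℕ)) ^ m := by
    intro m
    rw [rt, rt, ← Complex.exp_sub, ← Complex.exp_nat_mul]
    congr 1
    push_cast
    ring
  rw [Finset.sum_congr rfl fun (m : Fin N) _ => key (m : ℕ)]
  rw [Fin.sum_univ_eq_sum_range (fun m => (rt N (b : ℕ) / rt N (a : ℕ)) ^ m) N]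
  split_ifs with h
  · subst h
    simp [div_self (rt_ne_zero N (a : ℕ))]
  · have hne : rt N (b : ℕ) / rt N (a : ℕ) ≠ 1 := by
      intro h1
      rw [div_eq_one_iff_eq (rt_ne_zero _ _)] at h1
      exact h (Fin.ext (rt_inj b.2 a.2 h1)).symm
    rw [geom_sum_eq hne, div_pow, rt_pow _ hN, rt_pow _ hN]
    simp

variable {ι : Type*} [Fintype ι] [DecidableEq ι]

lemma gdft_one (q : ι → ℕ) (hq : ∀ j, 0 < q j) (n n' : GC q) :
    gdft q (fun _ => 1) (fun j => ((n j : ℕ) : ℤ) - ((n' j : ℕ) : ℤ)) =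
      if n = n' then 1 else 0 := by
  have hq' : ∏ j, (q j : ℂ) ≠ 0 := Finset.prod_ne_zero_iff.2 fun j _ => by
    exact_mod_cast (hq j).ne'
  have h1 : ∑ m : GC q, (((fun _ => 1 : GC q → ℝ) m : ℝ) : ℂ) *
      Complex.exp (-(2 * Real.pi * Complex.I) *
        ∑ j, ((((n j : ℕ) : ℤ) - ((n' j : ℕ) : ℤ) : ℤ) : ℂ) * ((m j : ℕ) : ℂ) / (q j : ℂ)) =
      ∏ j, (if n j = n' j then (q j : ℂ) else 0) := by
    rw [Finset.prod_congr rfl fun j _ => (geom_zero (q j) (hq j) (n j) (n' j)).symm,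
      Fintype.prod_sum]
    refine Finset.sum_congr rfl fun m _ => ?_
    rw [Complex.ofReal_one, one_mul, Finset.mul_sum, Complex.exp_sum]
    refine Finset.prod_congr rfl fun j _ => ?_
    congr 1
    ring
  rw [gdft, h1]
  split_ifs with h
  · subst h
    simp only [if_true]
    rw [one_div, inv_mul_cancel₀ hq']
  · obtain ⟨j, hj⟩ := Function.ne_iff.1 h
    rw [Finset.prod_eq_zero (f := fun j => if n j = n' j then (q j : ℂ) else 0)
      (Finset.mem_univ j) (if_neg hj), mul_zero]

lemma Bmat_diag (q : ι → ℕ) (v : GC q → ℝ) (n : GC q) :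
    Bmat q v n n = (((1 / ∏ j, (q j : ℝ)) * ∑ m : GC q, v m : ℝ) : ℂ) := by
  rw [Bmat, gdft]
  push_cast
  congr 1
  refine Finset.sum_congr rfl fun m _ => ?_
  simp

lemma Bmat_shift (q : ι → ℕ) (hq : ∀ j, 0 < q j) (v : GC q → ℝ) (C : ℝ) :
    Bmat q (fun n => v n + C) = Bmat q v + (C : ℂ) • 1 := by
  ext n n'
  rw [Matrix.add_apply, Matrix.smul_apply, Matrix.one_apply, ← gdft_one q hq, Bmat, Bmat]
  simp only [gdft, smul_eq_mul, Finset.mul_sum, ← Finset.sum_add_distrib]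
  refine Finset.sum_congr rfl fun m _ => ?_
  push_cast
  ring

variable {ι₁ ι₂ : Type*} [Fintype ι₁] [DecidableEq ι₁] [Fintype ι₂] [DecidableEq ι₂]

/-- Splitting the cell. -/
def cellSplit (q : ι → ℕ) (e : ι₁ ⊕ ι₂ ≃ ι) :
    GC q ≃ GC (fun i => q (e (Sum.inl i))) × GC (fun i => q (e (Sum.inr i))) :=
  (Equiv.piCongrLeft (fun i => Fin (q i)) e).symm.trans
    (Equiv.sumPiEquivProdPi (fun i => Fin (q (e i))))

lemma cellSplit_fst (q : ι → ℕ) (e : ι₁ ⊕ ι₂ ≃ ι) (n : GC q) (i : ι₁) :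
    (cellSplit q e n).1 i = n (e (Sum.inl i)) := rfl

lemma cellSplit_snd (q : ι → ℕ) (e : ι₁ ⊕ ι₂ ≃ ι) (n : GC q) (i : ι₂) :
    (cellSplit q e n).2 i = n (e (Sum.inr i)) := rfl

lemma gdft_split (q : ι → ℕ) (e : ι₁ ⊕ ι₂ ≃ ι) (v : GC q → ℝ)
    (v₁ : GC (fun i => q (e (Sum.inl i))) → ℝ) (v₂ : GC (fun i => q (e (Sum.inr i))) → ℝ)
    (hv : ∀ n, v n = v₁ (cellSplit q e n).1 + v₂ (cellSplit q e n).2) (l : ι → ℤ) :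
    gdft q v l =
      gdft (fun i => q (e (Sum.inl i))) v₁ (fun i => l (e (Sum.inl i))) *
        gdft (fun i => q (e (Sum.inr i))) (fun _ => 1) (fun i => l (e (Sum.inr i))) +
      gdft (fun i => q (e (Sum.inl i))) (fun _ => 1) (fun i => l (e (Sum.inl i))) *
        gdft (fun i => q (e (Sum.inr i))) v₂ (fun i => l (e (Sum.inr i))) := by
  have hp : ∏ j, (q j : ℂ) = (∏ i, (q (e (Sum.inl i)) : ℂ)) * ∏ i, (q (e (Sum.inr i)) : ℂ) := by
    rw [← Equiv.prod_comp e, Fintype.prod_sum_type]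
  have hs : ∀ f : ι → ℂ, ∑ j, f j = ∑ i, f (e (Sum.inl i)) + ∑ i, f (e (Sum.inr i)) := by
    intro f
    rw [← Equiv.sum_comp e, Fintype.sum_sum_type]
  simp only [gdft]
  rw [hp, mul_mul_mul_comm (1 / ∏ i, (q (e (Sum.inl i)) : ℂ)) _ (1 / ∏ i, (q (e (Sum.inr i)) : ℂ)),
    mul_mul_mul_comm (1 / ∏ i, (q (e (Sum.inl i)) : ℂ)) _ (1 / ∏ i, (q (e (Sum.inr i)) : ℂ)),
    Finset.sum_mul_sum, Finset.sum_mul_sum, ← mul_add,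
    ← Finset.sum_add_distrib]
  simp only [← Finset.sum_add_distrib]
  rw [← Fintype.sum_prod_type', ← Equiv.sum_comp (cellSplit q e)]
  congr 1
  · rw [one_div, one_div, one_div, mul_inv]
  · refine Finset.sum_congr rfl fun n _ => ?_
    rw [hs, mul_add, Complex.exp_add, hv]
    simp only [cellSplit_fst, cellSplit_snd]
    push_cast
    ring

lemma FM_split (q : ι → ℕ) (hq : ∀ j, 0 < q j) (e : ι₁ ⊕ ι₂ ≃ ι) (v : GC q → ℝ)
    (v₁ : GC (fun i => q (e (Sum.inl i))) → ℝ) (v₂ : GC (fun i => q (e (Sum.inr i))) → ℝ)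
    (hv : ∀ n, v n = v₁ (cellSplit q e n).1 + v₂ (cellSplit q e n).2) (z : ι → ℂ) (x : ℂ) :
    IsEig (FM q (Bmat q v) z) x ↔
      ∃ a, IsEig (FM _ (Bmat _ v₁) (fun i => z (e (Sum.inl i)))) a ∧
        IsEig (FM _ (Bmat _ v₂) (fun i => z (e (Sum.inr i)))) (x - a) := by
  rw [← isEig_kron _ _ ((FM q (Bmat q v) z).submatrix (cellSplit q e).symm (cellSplit q e).symm)]
  · rw [IsEig, IsEig, ← Matrix.det_submatrix_equiv_self (cellSplit q e).symm, Matrix.submatrix_sub,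
      Pi.sub_apply, Pi.sub_apply, Matrix.submatrix_smul, Pi.smul_apply, Pi.smul_apply,
      Matrix.submatrix_one_equiv]
  · intro i j i' j'
    obtain ⟨n, hn⟩ := (cellSplit q e).surjective (i, j)
    obtain ⟨n', hn'⟩ := (cellSplit q e).surjective (i', j')
    rw [← hn, ← hn', Matrix.submatrix_apply, Equiv.symm_apply_apply, Equiv.symm_apply_apply]
    obtain ⟨rfl, rfl⟩ := Prod.ext_iff.1 hn
    obtain ⟨rfl, rfl⟩ := Prod.ext_iff.1 hn'
    have hnn : n = n' ↔ (cellSplit q e n).1 = (cellSplit q e n').1 ∧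
        (cellSplit q e n).2 = (cellSplit q e n').2 := by
      rw [← Prod.ext_iff, (cellSplit q e).injective.eq_iff]
    have hA : Ad q z n = Ad (fun i => q (e (Sum.inl i))) (fun i => z (e (Sum.inl i)))
        (cellSplit q e n).1 + Ad (fun i => q (e (Sum.inr i))) (fun i => z (e (Sum.inr i)))
        (cellSplit q e n).2 := by
      rw [Ad, ← Equiv.sum_comp e, Fintype.sum_sum_type]
      rfl
    have hB := gdft_split q e v v₁ v₂ hv (fun j => ((n j : ℕ) : ℤ) - ((n' j : ℕ) : ℤ))
    have h1 := gdft_one (fun i => q (e (Sum.inl i))) (fun i => hq _) (cellSplit q e n).1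
      (cellSplit q e n').1
    have h2 := gdft_one (fun i => q (e (Sum.inr i))) (fun i => hq _) (cellSplit q e n).2
      (cellSplit q e n').2
    simp only [cellSplit_fst, cellSplit_snd] at h1 h2
    rw [h1, h2] at hB
    simp only [FM, Matrix.add_apply, Matrix.diagonal_apply]
    rw [show Bmat q v n n' = _ from hB, hA]
    simp only [hnn, Bmat, cellSplit_fst, cellSplit_snd]
    by_cases ha : (cellSplit q e n).1 = (cellSplit q e n').1 <;>
    by_cases hb : (cellSplit q e n).2 = (cellSplit q e n').2 <;>
    simp only [ha, hb, and_self, and_true, and_false, if_true, if_false] <;> ring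

end FourierPart

section Blocks

variable {r d : ℕ}

lemma blockEmbed_ne (D : Fin r → ℕ) (hsum : ∑ j, D j = d) {j k : Fin r} (hjk : j < k)
    (i : Fin (D j)) (i' : Fin (D k)) : blockEmbed D hsum j i ≠ blockEmbed D hsum k i' := by
  intro h
  have h1 := congrArg Fin.val h
  simp only [blockEmbed] at h1
  have hj : j ∉ Finset.univ.filter (fun k => k < j) := by simp
  have h2 : (∑ l ∈ Finset.univ.filter (fun l => l < j), D l) + D j ≤
      ∑ l ∈ Finset.univ.filter (fun l => l < k), D l := by
    calc (∑ l ∈ Finset.univ.filter (fun l => l < j), D l) + D j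
        = ∑ l ∈ insert j (Finset.univ.filter (fun l => l < j)), D l := by
          rw [Finset.sum_insert hj, add_comm]
      _ ≤ ∑ l ∈ Finset.univ.filter (fun l => l < k), D l := by
          apply Finset.sum_le_sum_of_subset
          intro l hl
          simp only [Finset.mem_insert, Finset.mem_filter, Finset.mem_univ, true_and] at hl ⊢
          rcases hl with rfl | hl
          · exact hjk
          · exact hl.trans hjk
  have := i.2
  omega

lemma blockEmbed_notMem (D : Fin r → ℕ) (hsum : ∑ j, D j = d) {j k : Fin r} (hjk : k ≠ j)
    (i' : Fin (D k)) : blockEmbed D hsum k i' ∉ Set.range (blockEmbed D hsum j) := by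
  rintro ⟨i, hi⟩
  rcases lt_or_gt_of_ne hjk with h | h
  · exact blockEmbed_ne D hsum h i' i hi.symm
  · exact blockEmbed_ne D hsum h i i' hi

lemma blockEmbed_inj (D : Fin r → ℕ) (hsum : ∑ j, D j = d) (j : Fin r) :
    Function.Injective (blockEmbed D hsum j) := by
  intro i i' h
  have h1 := congrArg Fin.val h
  simp only [blockEmbed] at h1
  exact Fin.ext (by omega)

/-- Splitting the coordinates into block `j` and the rest. -/
def blockEquiv (D : Fin r → ℕ) (hsum : ∑ j, D j = d) (j : Fin r) :
    Fin (D j) ⊕ {i : Fin d // i ∉ Set.range (blockEmbed D hsum j)} ≃ Fin d :=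
  Equiv.ofBijective (Sum.elim (blockEmbed D hsum j) Subtype.val) (by
    constructor
    · rintro (a | a) (b | b) h
      · exact congrArg _ (blockEmbed_inj D hsum j h)
      · exact absurd ⟨a, h⟩ b.2
      · exact absurd ⟨b, h.symm⟩ a.2
      · exact congrArg _ (Subtype.ext h)
    · intro i
      by_cases hi : i ∈ Set.range (blockEmbed D hsum j)
      · obtain ⟨a, ha⟩ := hi
        exact ⟨Sum.inl a, ha⟩
      · exact ⟨Sum.inr ⟨i, hi⟩, rfl⟩)

open Classical in
/-- The part of a separable potential outside block `j`. -/
def restPot (D : Fin r → ℕ) (hsum : ∑ j, D j = d) (j : Fin r) (q : Fin d → ℕ)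
    (Vj : (j : Fin r) → (Fin (D j) → ℤ) → ℝ)
    (m : GC (fun i => q (blockEquiv D hsum j (Sum.inr i)))) : ℝ :=
  ∑ k ∈ Finset.univ.erase j, Vj k (fun i =>
    if h : blockEmbed D hsum k i ∉ Set.range (blockEmbed D hsum j) then
      ((m ⟨blockEmbed D hsum k i, h⟩ : ℕ) : ℤ) else 0)

lemma cellRes_split (D : Fin r → ℕ) (hsum : ∑ j, D j = d) (j : Fin r) (q : Fin d → ℕ)
    (V : (Fin d → ℤ) → ℝ) (Vj : (j : Fin r) → (Fin (D j) → ℤ) → ℝ)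
    (hV : ∀ n : Fin d → ℤ, V n = ∑ j, Vj j (fun i => n (blockEmbed D hsum j i))) (n : GC q) :
    cellRes q V n =
      cellRes (fun i => q (blockEquiv D hsum j (Sum.inl i))) (Vj j)
        (cellSplit q (blockEquiv D hsum j) n).1 +
      restPot D hsum j q Vj (cellSplit q (blockEquiv D hsum j) n).2 := by
  rw [cellRes, hV, ← Finset.add_sum_erase _ _ (Finset.mem_univ j), restPot]
  congr 1
  refine Finset.sum_congr rfl fun k hk => ?_
  congr 1
  funext i
  rw [dif_pos (blockEmbed_notMem D hsum (Finset.ne_of_mem_erase hk) i)]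
  rfl

theorem main_aux
    (d r : ℕ) (hd : 3 ≤ d) (hr : 2 ≤ r)
    (q : Fin d → ℕ) (hq : ∀ j, 0 < q j)
    (hco : ∀ i j : Fin d, i ≠ j → Nat.Coprime (q i) (q j))
    (D : Fin r → ℕ) (hD : ∀ j, 1 ≤ D j) (hsum : ∑ j, D j = d)
    (V Y : (Fin d → ℤ) → ℝ)
    (Vj Yj : (j : Fin r) → (Fin (D j) → ℤ) → ℝ)
    (hVsep : ∀ n : Fin d → ℤ, V n = ∑ j, Vj j (fun i => n (blockEmbed D hsum j i)))
    (hYsep : ∀ n : Fin d → ℤ, Y n = ∑ j, Yj j (fun i => n (blockEmbed D hsum j i)))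
    (hFermi : FermiIsospectral d q V Y) (j : Fin r) :
    ∃ C : ℝ, FloquetIsospectral (D j) (fun i => q (blockEmbed D hsum j i))
        (fun m => Vj j m + C) (Yj j) := by
  classical
  obtain ⟨lam0, hF⟩ := hFermi
  let e := blockEquiv D hsum j
  have hF' : ∀ z : Fin d → ℂ, (∀ j, z j ≠ 0) → IsEig (FM q (Bmat q (cellRes q V)) z) lam0 →
      IsEig (FM q (Bmat q (cellRes q Y)) z) lam0 := by
    intro z hz h
    have h1 : z ∈ {z : Fin d → ℂ | (∀ j, z j ≠ 0) ∧ floquetDet d q V z lam0 = 0} := by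
      refine ⟨hz, ?_⟩
      rw [floquetDet, floquetMatrix_eq]
      exact h
    rw [hF] at h1
    have h2 := h1.2
    rw [floquetDet, floquetMatrix_eq] at h2
    exact h2
  haveI : Nonempty (Fin (D j)) := ⟨⟨0, hD j⟩⟩
  haveI : Nonempty {i : Fin d // i ∉ Set.range (blockEmbed D hsum j)} := by
    haveI : Nontrivial (Fin r) := Fin.nontrivial_iff_two_le.2 hr
    obtain ⟨k, hk⟩ := exists_ne j
    exact ⟨⟨blockEmbed D hsum k ⟨0, hD k⟩, blockEmbed_notMem D hsum hk _⟩⟩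
  have hcard : 3 ≤ Fintype.card (Fin (D j)) +
      Fintype.card {i : Fin d // i ∉ Set.range (blockEmbed D hsum j)} := by
    rw [← Fintype.card_sum, Fintype.card_congr e, Fintype.card_fin]
    exact hd
  have hne : ∀ a b, a ≠ b → Nat.Coprime (q (e a)) (q (e b)) := fun a b h =>
    hco _ _ (e.injective.ne h)
  have hL : Link (fun i => q (e (Sum.inl i))) (fun i => q (e (Sum.inr i)))
      (Bmat _ (cellRes (fun i => q (e (Sum.inl i))) (Vj j)))
      (Bmat _ (cellRes (fun i => q (e (Sum.inl i))) (Yj j)))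
      (Bmat _ (restPot D hsum j q Vj)) (Bmat _ (restPot D hsum j q Yj)) lam0 := by
    intro z₁ z₂ hz₁ hz₂ h
    have hz : ∀ i, (fun i => Sum.elim z₁ z₂ (e.symm i)) i ≠ 0 := by
      intro i
      show Sum.elim z₁ z₂ (e.symm i) ≠ 0
      rcases e.symm i with a | a
      · exact hz₁ a
      · exact hz₂ a
    have hv := FM_split q hq e _ _ _ (cellRes_split D hsum j q V Vj hVsep)
      (fun i => Sum.elim z₁ z₂ (e.symm i)) lam0
    have hy := FM_split q hq e _ _ _ (cellRes_split D hsum j q Y Yj hYsep)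
      (fun i => Sum.elim z₁ z₂ (e.symm i)) lam0
    simp only [Equiv.symm_apply_apply, Sum.elim_inl, Sum.elim_inr] at hv hy
    exact hy.1 (hF' _ hz (hv.2 h))
  obtain ⟨C, hC⟩ := two_block hcard (fun i => q (e (Sum.inl i))) (fun i => q (e (Sum.inr i)))
    (fun _ => hq _) (fun _ => hq _) (fun a b h => hne _ _ (Sum.inl_injective.ne h))
    (fun a b h => hne _ _ (Sum.inr_injective.ne h)) (fun a b => hne _ _ Sum.inl_ne_inr)
    _ _ _ _ _ _ _ _ (Bmat_diag _ _) (Bmat_diag _ _) (Bmat_diag _ _) (Bmat_diag _ _) lam0 hL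
  refine ⟨C, fun z hz lam => ?_⟩
  have h := hC z hz lam
  rw [← Bmat_shift _ (fun _ => hq _)] at h
  rw [floquetDet, floquetDet, floquetMatrix_eq, floquetMatrix_eq]
  exact h

end Blocks

end FermiAux

/-- Theorem 1.4: if `V = ⊕ V_j` and `Y = ⊕ Y_j` are separable and Fermi
isospectral, then up to a constant the lower dimensional decompositions `V_j` and `Y_j` are
Floquet isospectral. -/
theorem fermi_isospectral_separable_blocks_floquet_isospectral
    (d r : ℕ) (hd : 3 ≤ d) (hr : 2 ≤ r)
    (q : Fin d → ℕ) (hq : ∀ j, 0 < q j)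
    (hco : ∀ i j : Fin d, i ≠ j → Nat.Coprime (q i) (q j))
    (D : Fin r → ℕ) (hD : ∀ j, 1 ≤ D j) (hsum : ∑ j, D j = d)
    (V Y : (Fin d → ℤ) → ℝ)
    (hVper : IsPeriodicPotential d q V) (hYper : IsPeriodicPotential d q Y)
    (Vj Yj : (j : Fin r) → (Fin (D j) → ℤ) → ℝ)
    (hVsep : ∀ n : Fin d → ℤ, V n = ∑ j, Vj j (fun i => n (blockEmbed D hsum j i)))
    (hYsep : ∀ n : Fin d → ℤ, Y n = ∑ j, Yj j (fun i => n (blockEmbed D hsum j i)))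
    (hFermi : FermiIsospectral d q V Y) :
    ∀ j : Fin r, ∃ C : ℝ,
      FloquetIsospectral (D j) (fun i => q (blockEmbed D hsum j i))
        (fun m => Vj j m + C) (Yj j) := by
  exact FermiAux.main_aux d r hd hr q hq hco D hD hsum V Y Vj Yj hVsep hYsep hFermi

end
end
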